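/- arXiv:1410.5191 — 9 statements merged into one kernel-verified Lean document; each statement's English description precedes it below -/
import Mathlib

section
/- Fix an integer t ≥ 1 and let D be the Choice gadget with t output arcs: the directed multigraph on vertices w, x, y, z and u_i, v_i (i ∈ {1,…,t}) whose arcs are w→x, x→y (the input arc), y→z, and, for each i ∈ {1,…,t}, the arcs z→u_i, u_i→v_i (the output arcs) and v_i→w. Then: (a) every nonempty balanced arc subset of D contains the input arc, contains each of w→x, y→z, and contains exactly one output arc u_i→v_i (together with the corresponding arcs z→u_i and v_i→w); and (b) for each i ∈ {1,…,t}, the directed cycle {w→x, x→y, y→z, z→u_i, u_i→v_i, v_i→w} is a balanced arc subset containing the input arc whose unique output arc is u_i→v_i. -/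
/-- Vertices of the Choice gadget with `t` output arcs: `w`, `x`, `y`, `z` and
`u i`, `v i` for `i ∈ {1,…,t}`. -/
inductive ChV (t : ℕ) : Type
  | w : ChV t
  | x : ChV t
  | y : ChV t
  | z : ChV t
  | u (i : Fin t) : ChV t
  | v (i : Fin t) : ChV t
  deriving DecidableEq, Fintype

/-- Arcs of the Choice gadget: `w→x`, `x→y` (the input arc), `y→z`, and for each
`i ∈ {1,…,t}` the arcs `z→u i`, `u i→v i` (the output arcs) and `v i→w`. -/
inductive ChA (t : ℕ) : Type
  | wx : ChA t                -- w → x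
  | input : ChA t             -- x → y  (the input arc)
  | yz : ChA t                -- y → z
  | zu (i : Fin t) : ChA t    -- z → u i
  | out (i : Fin t) : ChA t   -- u i → v i  (the output arcs)
  | vw (i : Fin t) : ChA t    -- v i → w
  deriving DecidableEq, Fintype

def chTail {t : ℕ} : ChA t → ChV t
  | .wx => .w
  | .input => .x
  | .yz => .y
  | .zu i => .z
  | .out i => .u i
  | .vw i => .v i

def chHead {t : ℕ} : ChA t → ChV t
  | .wx => .x
  | .input => .y
  | .yz => .z
  | .zu i => .u i
  | .out i => .v i
  | .vw i => .w

/-- Balanced arc subsets: at every vertex, out-degree equals in-degree. -/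
def ChBalanced {t : ℕ} (S : Finset (ChA t)) : Prop :=
  ∀ p : ChV t,
    (S.filter fun a => chTail a = p).card = (S.filter fun a => chHead a = p).card

theorem ch_card_single {t : ℕ} (S : Finset (ChA t)) (f : ChA t → ChV t) (p : ChV t) (e : ChA t)
    (h : ∀ a, f a = p ↔ a = e) :
    (S.filter fun a => f a = p).card = if e ∈ S then 1 else 0 := by
  simp only [h, Finset.filter_eq']
  split_ifs <;> simp

/-- For the Choice gadget with `t ≥ 1` output arcs:
(a) every nonempty balanced arc subset contains the input arc, contains `w→x` and `y→z`,
and contains exactly one output arc `u i→v i`, together with the corresponding arcs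
`z→u i` and `v i→w`;
(b) for each `i`, the directed cycle `{w→x, x→y, y→z, z→u i, u i→v i, v i→w}` is a
balanced arc subset containing the input arc whose unique output arc is `u i→v i`. -/
theorem choice_gadget (t : ℕ) (ht : 1 ≤ t) :
    (∀ S : Finset (ChA t), ChBalanced S → S.Nonempty →
      ChA.input ∈ S ∧ ChA.wx ∈ S ∧ ChA.yz ∈ S ∧
      (∃! i : Fin t, ChA.out i ∈ S) ∧
      (∀ i : Fin t, ChA.out i ∈ S → ChA.zu i ∈ S ∧ ChA.vw i ∈ S)) ∧
    (∀ i : Fin t,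
      ChBalanced ({ChA.wx, ChA.input, ChA.yz, ChA.zu i, ChA.out i, ChA.vw i} :
        Finset (ChA t)) ∧
      ChA.input ∈ ({ChA.wx, ChA.input, ChA.yz, ChA.zu i, ChA.out i, ChA.vw i} :
        Finset (ChA t)) ∧
      (∀ j : Fin t,
        ChA.out j ∈ ({ChA.wx, ChA.input, ChA.yz, ChA.zu i, ChA.out i, ChA.vw i} :
          Finset (ChA t)) ↔ j = i)) := by
  constructor
  · intro S hS hne
    have hx := hS .x
    rw [ch_card_single S chTail .x .input (by intro a; cases a <;> simp [chTail]),
      ch_card_single S chHead .x .wx (by intro a; cases a <;> simp [chHead])] at hx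
    have hy := hS .y
    rw [ch_card_single S chTail .y .yz (by intro a; cases a <;> simp [chTail]),
      ch_card_single S chHead .y .input (by intro a; cases a <;> simp [chHead])] at hy
    have hu : ∀ i, ChA.out i ∈ S ↔ ChA.zu i ∈ S := by
      intro i
      have h := hS (.u i)
      rw [ch_card_single S chTail (.u i) (.out i) (by intro a; cases a <;> simp [chTail]),
        ch_card_single S chHead (.u i) (.zu i) (by intro a; cases a <;> simp [chHead])] at h
      split_ifs at h <;> simp_all
    have hv : ∀ i, ChA.vw i ∈ S ↔ ChA.out i ∈ S := by
      intro i
      have h := hS (.v i)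
      rw [ch_card_single S chTail (.v i) (.vw i) (by intro a; cases a <;> simp [chTail]),
        ch_card_single S chHead (.v i) (.out i) (by intro a; cases a <;> simp [chHead])] at h
      split_ifs at h <;> simp_all
    have hx' : ChA.input ∈ S ↔ ChA.wx ∈ S := by split_ifs at hx <;> simp_all
    have hy' : ChA.yz ∈ S ↔ ChA.input ∈ S := by split_ifs at hy <;> simp_all
    have hz := hS .z
    rw [ch_card_single S chHead .z .yz (by intro a; cases a <;> simp [chHead])] at hz
    have hyz : ChA.yz ∈ S := by
      by_contra hn
      rw [if_neg hn, Finset.card_eq_zero, Finset.filter_eq_empty_iff] at hz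
      have hzu : ∀ i, ChA.zu i ∉ S := fun i hi => hz hi rfl
      obtain ⟨a, ha⟩ := hne
      cases a with
      | wx => exact hn (hy'.2 (hx'.2 ha))
      | input => exact hn (hy'.2 ha)
      | yz => exact hn ha
      | zu i => exact hzu i ha
      | out i => exact hzu i ((hu i).1 ha)
      | vw i => exact hzu i ((hu i).1 ((hv i).1 ha))
    rw [if_pos hyz, Finset.card_eq_one] at hz
    obtain ⟨a, ha⟩ := hz
    have hmem : ∀ b, (b ∈ S ∧ chTail b = .z) ↔ b = a := by
      intro b
      rw [← Finset.mem_filter (p := fun a => chTail a = .z), ha, Finset.mem_singleton]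
    refine ⟨hy'.1 hyz, hx'.1 (hy'.1 hyz), hyz, ?_, fun i hi => ⟨(hu i).1 hi, (hv i).2 hi⟩⟩
    obtain ⟨haS, haz⟩ := (hmem a).2 rfl
    cases a with
    | zu i =>
      refine ⟨i, (hu i).2 haS, fun j hj => ?_⟩
      have := (hmem (.zu j)).1 ⟨(hu j).1 hj, rfl⟩
      exact ChA.zu.inj this
    | _ => simp [chTail] at haz
  · intro i
    refine ⟨?_, by simp, fun j => by simp⟩
    intro p
    cases p with
    | u j => by_cases h : i = j <;> simp only [Finset.filter_insert, Finset.filter_singleton] <;> simp [chTail, chHead, h]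
    | v j => by_cases h : i = j <;> simp only [Finset.filter_insert, Finset.filter_singleton] <;> simp [chTail, chHead, h]
    | _ => simp only [Finset.filter_insert, Finset.filter_singleton] <;> simp [chTail, chHead]
end

section
/- Fix integers t_l, t_r ≥ 1 and let D be the Checksum gadget: the directed multigraph on vertices w, z, together with x_i, y_i (i ∈ {1,…,t_l}) and u_j, v_j (j ∈ {1,…,t_r}), whose arcs are w→x_i, x_i→y_i (the left input arcs), y_i→z for each i ∈ {1,…,t_l}, and z→u_j, u_j→v_j (the right input arcs), v_j→w for each j ∈ {1,…,t_r}. Then: (a) every balanced arc subset of D contains exactly as many left input arcs as right input arcs; and (b) for all subsets L ⊆ {1,…,t_l} and R ⊆ {1,…,t_r} with |L| = |R| there is a balanced arc subset of D whose set of left input arcs is exactly {x_i→y_i : i ∈ L} and whose set of right input arcs is exactly {u_j→v_j : j ∈ R}. -/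
/-- Vertices of the Checksum gadget: `w`, `z`, together with `x i`, `y i` for
`i ∈ {1,…,tl}` and `u j`, `v j` for `j ∈ {1,…,tr}`. -/
inductive CkV (tl tr : ℕ) : Type
  | w : CkV tl tr
  | z : CkV tl tr
  | x (i : Fin tl) : CkV tl tr
  | y (i : Fin tl) : CkV tl tr
  | u (j : Fin tr) : CkV tl tr
  | v (j : Fin tr) : CkV tl tr
  deriving DecidableEq, Fintype

/-- Arcs of the Checksum gadget: `w→x i`, `x i→y i` (the left input arcs), `y i→z` for
each `i ∈ {1,…,tl}`, and `z→u j`, `u j→v j` (the right input arcs), `v j→w` for each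
`j ∈ {1,…,tr}`. -/
inductive CkA (tl tr : ℕ) : Type
  | wx (i : Fin tl) : CkA tl tr     -- w → x i
  | left (i : Fin tl) : CkA tl tr   -- x i → y i  (the left input arcs)
  | yz (i : Fin tl) : CkA tl tr     -- y i → z
  | zu (j : Fin tr) : CkA tl tr     -- z → u j
  | right (j : Fin tr) : CkA tl tr  -- u j → v j  (the right input arcs)
  | vw (j : Fin tr) : CkA tl tr     -- v j → w
  deriving DecidableEq, Fintype

def ckTail {tl tr : ℕ} : CkA tl tr → CkV tl tr
  | .wx _ => .w
  | .left i => .x i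
  | .yz i => .y i
  | .zu _ => .z
  | .right j => .u j
  | .vw j => .v j

def ckHead {tl tr : ℕ} : CkA tl tr → CkV tl tr
  | .wx i => .x i
  | .left i => .y i
  | .yz _ => .z
  | .zu j => .u j
  | .right j => .v j
  | .vw _ => .w

/-- Balanced arc subsets: at every vertex, out-degree equals in-degree. -/
def CkBalanced {tl tr : ℕ} (S : Finset (CkA tl tr)) : Prop :=
  ∀ p : CkV tl tr,
    (S.filter fun a => ckTail a = p).card = (S.filter fun a => ckHead a = p).card

theorem ck_card_many {tl tr n : ℕ} (S : Finset (CkA tl tr)) (P : CkA tl tr → Prop)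
    [DecidablePred P] (f : Fin n → CkA tl tr) (hf : Function.Injective f)
    (hP : ∀ a, P a ↔ ∃ i, f i = a) :
    (S.filter P).card = (Finset.univ.filter fun i : Fin n => f i ∈ S).card := by
  rw [← Finset.card_image_of_injective _ hf]
  congr 1
  ext a
  simp only [Finset.mem_filter, Finset.mem_image, Finset.mem_univ, true_and, hP]
  constructor
  · rintro ⟨h, i, rfl⟩
    exact ⟨i, h, rfl⟩
  · rintro ⟨i, h, rfl⟩
    exact ⟨h, i, rfl⟩

theorem ck_card_one {tl tr : ℕ} (S : Finset (CkA tl tr)) (P : CkA tl tr → Prop)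
    [DecidablePred P] (b : CkA tl tr) (hP : ∀ a, P a ↔ a = b) :
    (S.filter P).card = if b ∈ S then 1 else 0 := by
  have h : S.filter P = S.filter (fun a => a = b) := Finset.filter_congr fun a _ => hP a
  rw [h, Finset.filter_eq']
  split_ifs <;> simp

theorem ck_ite_iff (p q : Prop) [Decidable p] [Decidable q] :
    ((if p then 1 else 0 : ℕ) = if q then 1 else 0) ↔ (p ↔ q) := by
  by_cases p <;> by_cases q <;> simp_all

theorem ck_balanced_iff {tl tr : ℕ} (S : Finset (CkA tl tr)) : CkBalanced S ↔
    ((Finset.univ.filter fun i : Fin tl => CkA.wx i ∈ S).card =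
        (Finset.univ.filter fun j : Fin tr => CkA.vw j ∈ S).card) ∧
    ((Finset.univ.filter fun j : Fin tr => CkA.zu j ∈ S).card =
        (Finset.univ.filter fun i : Fin tl => CkA.yz i ∈ S).card) ∧
    (∀ i : Fin tl, CkA.left i ∈ S ↔ CkA.wx i ∈ S) ∧
    (∀ i : Fin tl, CkA.yz i ∈ S ↔ CkA.left i ∈ S) ∧
    (∀ j : Fin tr, CkA.right j ∈ S ↔ CkA.zu j ∈ S) ∧
    (∀ j : Fin tr, CkA.vw j ∈ S ↔ CkA.right j ∈ S) := by
  have inj1 : Function.Injective (CkA.wx : Fin tl → CkA tl tr) := fun a b h => by cases h; rfl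
  have inj2 : Function.Injective (CkA.yz : Fin tl → CkA tl tr) := fun a b h => by cases h; rfl
  have inj3 : Function.Injective (CkA.zu : Fin tr → CkA tl tr) := fun a b h => by cases h; rfl
  have inj4 : Function.Injective (CkA.vw : Fin tr → CkA tl tr) := fun a b h => by cases h; rfl
  have hw : ((S.filter fun a => ckTail a = .w).card = (S.filter fun a => ckHead a = .w).card) ↔
      ((Finset.univ.filter fun i : Fin tl => CkA.wx i ∈ S).card =
        (Finset.univ.filter fun j : Fin tr => CkA.vw j ∈ S).card) := by
    rw [ck_card_many S _ CkA.wx inj1 (by intro a; cases a <;> simp [ckTail]),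
      ck_card_many S _ CkA.vw inj4 (by intro a; cases a <;> simp [ckHead])]
  have hz : ((S.filter fun a => ckTail a = .z).card = (S.filter fun a => ckHead a = .z).card) ↔
      ((Finset.univ.filter fun j : Fin tr => CkA.zu j ∈ S).card =
        (Finset.univ.filter fun i : Fin tl => CkA.yz i ∈ S).card) := by
    rw [ck_card_many S _ CkA.zu inj3 (by intro a; cases a <;> simp [ckTail]),
      ck_card_many S _ CkA.yz inj2 (by intro a; cases a <;> simp [ckHead])]
  have hx : ∀ i : Fin tl, ((S.filter fun a => ckTail a = .x i).card =
      (S.filter fun a => ckHead a = .x i).card) ↔ (CkA.left i ∈ S ↔ CkA.wx i ∈ S) := by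
    intro i
    rw [ck_card_one S _ (CkA.left i) (by intro a; cases a <;> simp [ckTail]),
      ck_card_one S _ (CkA.wx i) (by intro a; cases a <;> simp [ckHead]), ck_ite_iff]
  have hy : ∀ i : Fin tl, ((S.filter fun a => ckTail a = .y i).card =
      (S.filter fun a => ckHead a = .y i).card) ↔ (CkA.yz i ∈ S ↔ CkA.left i ∈ S) := by
    intro i
    rw [ck_card_one S _ (CkA.yz i) (by intro a; cases a <;> simp [ckTail]),
      ck_card_one S _ (CkA.left i) (by intro a; cases a <;> simp [ckHead]), ck_ite_iff]
  have hu : ∀ i : Fin tr, ((S.filter fun a => ckTail a = .u i).card =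
      (S.filter fun a => ckHead a = .u i).card) ↔ (CkA.right i ∈ S ↔ CkA.zu i ∈ S) := by
    intro i
    rw [ck_card_one S _ (CkA.right i) (by intro a; cases a <;> simp [ckTail]),
      ck_card_one S _ (CkA.zu i) (by intro a; cases a <;> simp [ckHead]), ck_ite_iff]
  have hv : ∀ i : Fin tr, ((S.filter fun a => ckTail a = .v i).card =
      (S.filter fun a => ckHead a = .v i).card) ↔ (CkA.vw i ∈ S ↔ CkA.right i ∈ S) := by
    intro i
    rw [ck_card_one S _ (CkA.vw i) (by intro a; cases a <;> simp [ckTail]),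
      ck_card_one S _ (CkA.right i) (by intro a; cases a <;> simp [ckHead]), ck_ite_iff]
  constructor
  · intro h
    exact ⟨hw.1 (h _), hz.1 (h _), fun i => (hx i).1 (h _), fun i => (hy i).1 (h _),
      fun i => (hu i).1 (h _), fun i => (hv i).1 (h _)⟩
  · rintro ⟨h1, h2, h3, h4, h5, h6⟩ p
    cases p with
    | w => exact hw.2 h1
    | z => exact hz.2 h2
    | x i => exact (hx i).2 (h3 i)
    | y i => exact (hy i).2 (h4 i)
    | u i => exact (hu i).2 (h5 i)
    | v i => exact (hv i).2 (h6 i)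

/-- The arcs on the paths selected by `L` and `R`. -/
def ckSel {tl tr : ℕ} (L : Finset (Fin tl)) (R : Finset (Fin tr)) : CkA tl tr → Bool
  | .wx i => decide (i ∈ L)
  | .left i => decide (i ∈ L)
  | .yz i => decide (i ∈ L)
  | .zu j => decide (j ∈ R)
  | .right j => decide (j ∈ R)
  | .vw j => decide (j ∈ R)

/-- For the Checksum gadget with `tl, tr ≥ 1`:
(a) every balanced arc subset contains exactly as many left input arcs as right input
arcs; and
(b) for all `L ⊆ {1,…,tl}`, `R ⊆ {1,…,tr}` with `|L| = |R|` there is a balanced arc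
subset whose left input arcs are exactly `{x i→y i : i ∈ L}` and whose right input arcs
are exactly `{u j→v j : j ∈ R}`. -/
theorem checksum_gadget (tl tr : ℕ) (htl : 1 ≤ tl) (htr : 1 ≤ tr) :
    (∀ S : Finset (CkA tl tr), CkBalanced S →
      (Finset.univ.filter fun i : Fin tl => CkA.left i ∈ S).card =
        (Finset.univ.filter fun j : Fin tr => CkA.right j ∈ S).card) ∧
    (∀ (L : Finset (Fin tl)) (R : Finset (Fin tr)), L.card = R.card →
      ∃ S : Finset (CkA tl tr), CkBalanced S ∧
        (∀ i : Fin tl, CkA.left i ∈ S ↔ i ∈ L) ∧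
        (∀ j : Fin tr, CkA.right j ∈ S ↔ j ∈ R)) := by
  refine ⟨fun S hS => ?_, fun L R h => ?_⟩
  · obtain ⟨h1, -, h3, -, -, h6⟩ := (ck_balanced_iff S).1 hS
    simpa only [h3, h6] using h1
  · have hm : ∀ a, a ∈ (Finset.univ.filter fun a => ckSel L R a = true) ↔ ckSel L R a = true :=
      fun a => by rw [Finset.mem_filter]; exact and_iff_right (Finset.mem_univ a)
    refine ⟨Finset.univ.filter fun a => ckSel L R a = true, (ck_balanced_iff _).2 ?_, ?_, ?_⟩ <;>
      simp only [hm] <;> simp [ckSel, h]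
end

section
/- Let D₁ and D₂ be disjoint directed multigraphs, each equipped with its own sets of double arcs and forbidden pairs. Let u₁v₁, …, u_tv_t be distinct arcs of D₁ and x₁y₁, …, x_ty_t distinct arcs of D₂ such that, for each i ∈ {1,…,t}, the vertices u_i and v_i both have in-degree 1 and out-degree 1 in D₁, and x_i and y_i both have in-degree 1 and out-degree 1 in D₂. Let D be the directed multigraph formed by, for each i ∈ {1,…,t}, identifying u_i with x_i and v_i with y_i, keeping both arcs u_iv_i and x_iy_i, and adding (u_iv_i, x_iy_i) as a new double arc (the double arcs and forbidden pairs of D are those of D₁ and D₂ together with these new double arcs). Then an arc subset S of D is properly balanced in D if and only if: (1) for each i ∈ {1,…,t}, S contains either both or neither of u_iv_i and x_iy_i; and (2) S ∩ A(D₁) is a properly balanced arc subset of D₁ and S ∩ A(D₂) is a properly balanced arc subset of D₂. -/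
namespace Stmt3

variable {V V₁ V₂ A₁ A₂ : Type*}

/-- An arc subset `S` is balanced if at every vertex the number of arcs of `S` with that
tail equals the number of arcs of `S` with that head. -/
def Balanced {V A : Type*} [DecidableEq V] (tl hd : A → V) (S : Finset A) : Prop :=
  ∀ v : V, (S.filter fun a => tl a = v).card = (S.filter fun a => hd a = v).card

/-- `S` respects the set `X` of double arcs. -/
def RespectsDouble {A : Type*} (X : Set (A × A)) (S : Finset A) : Prop :=
  ∀ p ∈ X, (p.1 ∈ S ↔ p.2 ∈ S)

/-- `S` respects the set `Y` of forbidden pairs. -/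
def RespectsForbidden {A : Type*} (Y : Set (A × A)) (S : Finset A) : Prop :=
  ∀ p ∈ Y, ¬(p.1 ∈ S ∧ p.2 ∈ S)

/-- `S` is properly balanced: balanced, respects double arcs and forbidden pairs. -/
def ProperlyBalanced {V A : Type*} [DecidableEq V] (tl hd : A → V)
    (X Y : Set (A × A)) (S : Finset A) : Prop :=
  Balanced tl hd S ∧ RespectsDouble X S ∧ RespectsForbidden Y S

theorem aux_one {A W : Type*} [Fintype A] [DecidableEq A] [DecidableEq W] (f : A → W) (e : A)
    (h : (Finset.univ.filter fun x : A => f x = f e).card = 1) (T : Finset A) :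
    (T.filter fun x => f x = f e).card = if e ∈ T then 1 else 0 := by
  obtain ⟨a, ha⟩ := Finset.card_eq_one.1 h
  have key : ∀ x, f x = f e ↔ x = a := by
    intro x
    have := Finset.ext_iff.1 ha x
    simpa using this
  have hea : e = a := (key e).1 rfl
  subst hea
  simp only [key, Finset.filter_eq']
  split_ifs <;> simp

theorem aux_le {A W : Type*} [Fintype A] [DecidableEq A] [DecidableEq W] (f : A → W) (w : W)
    (h : (Finset.univ.filter fun x : A => f x = w).card = 1) (T : Finset A) :
    (T.filter fun x => f x = w).card ≤ 1 := by
  rw [← h]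
  exact Finset.card_le_card (Finset.filter_subset_filter _ (Finset.subset_univ _))

theorem aux_split {A₁ A₂ V : Type*} [Fintype A₁] [Fintype A₂] [DecidableEq A₁] [DecidableEq A₂]
    [DecidableEq V] (f : A₁ → V) (g : A₂ → V) (S : Finset (A₁ ⊕ A₂)) (v : V) :
    (S.filter fun a => Sum.elim f g a = v).card =
      ((Finset.univ.filter fun x : A₁ => (Sum.inl x : A₁ ⊕ A₂) ∈ S).filter fun x => f x = v).card +
      ((Finset.univ.filter fun x : A₂ => (Sum.inr x : A₁ ⊕ A₂) ∈ S).filter fun x => g x = v).card := by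
  rw [← Finset.card_disjSum]
  congr 1
  ext a
  cases a <;> simp

/-- Lemma on joining graphs.  `D₁` (on vertices `V₁`, arcs `A₁`, with
double arcs `X₁` and forbidden pairs `Y₁`) and `D₂` (on `V₂`, `A₂`, `X₂`, `Y₂`) are
disjoint directed multigraphs.  The arcs `e₁ 1, …, e₁ t` of `D₁` and `e₂ 1, …, e₂ t` of
`D₂` are distinct, and all their endpoints have in-degree `1` and out-degree `1` in
their own graph.  The joined graph `D` has arc set `A₁ ⊕ A₂`, vertex set `V`, and is
described by injections `j₁ : V₁ → V`, `j₂ : V₂ → V` whose images cover `V` and overlap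
exactly in the identifications `tail(e₁ i) = tail(e₂ i)`, `head(e₁ i) = head(e₂ i)`;
its double arcs are those of `D₁` and `D₂` together with the pairs `(e₁ i, e₂ i)`, and
its forbidden pairs are those of `D₁` and `D₂`.  Then a subset `S` of the arcs of `D` is
properly balanced in `D` iff (1) for each `i`, `S` contains both or neither of `e₁ i`,
`e₂ i`, and (2) the restrictions of `S` to `D₁` and to `D₂` are properly balanced. -/
theorem join_correctness [Fintype V] [DecidableEq V]
    [Fintype V₁] [DecidableEq V₁] [Fintype V₂] [DecidableEq V₂]
    [Fintype A₁] [DecidableEq A₁] [Fintype A₂] [DecidableEq A₂]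
    (t₁ h₁ : A₁ → V₁) (t₂ h₂ : A₂ → V₂)
    (X₁ Y₁ : Set (A₁ × A₁)) (X₂ Y₂ : Set (A₂ × A₂))
    (hX₁ : ∀ p ∈ X₁, p.1 ≠ p.2 ∧ t₁ p.1 = t₁ p.2 ∧ h₁ p.1 = h₁ p.2)
    (hY₁ : ∀ p ∈ Y₁, p.1 ≠ p.2 ∧ t₁ p.1 = h₁ p.2 ∧ h₁ p.1 = t₁ p.2)
    (hX₂ : ∀ p ∈ X₂, p.1 ≠ p.2 ∧ t₂ p.1 = t₂ p.2 ∧ h₂ p.1 = h₂ p.2)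
    (hY₂ : ∀ p ∈ Y₂, p.1 ≠ p.2 ∧ t₂ p.1 = h₂ p.2 ∧ h₂ p.1 = t₂ p.2)
    (t : ℕ) (e₁ : Fin t → A₁) (e₂ : Fin t → A₂)
    (he₁ : Function.Injective e₁) (he₂ : Function.Injective e₂)
    -- the endpoints of the joined arcs have in- and out-degree 1 in their own graphs
    (hdeg₁ : ∀ i : Fin t, ∀ w : V₁, (w = t₁ (e₁ i) ∨ w = h₁ (e₁ i)) →
      (Finset.univ.filter fun x : A₁ => t₁ x = w).card = 1 ∧
      (Finset.univ.filter fun x : A₁ => h₁ x = w).card = 1)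
    (hdeg₂ : ∀ i : Fin t, ∀ w : V₂, (w = t₂ (e₂ i) ∨ w = h₂ (e₂ i)) →
      (Finset.univ.filter fun x : A₂ => t₂ x = w).card = 1 ∧
      (Finset.univ.filter fun x : A₂ => h₂ x = w).card = 1)
    -- the joined graph D, described by the vertex identifications j₁, j₂
    (j₁ : V₁ → V) (j₂ : V₂ → V)
    (hj₁ : Function.Injective j₁) (hj₂ : Function.Injective j₂)
    (hcover : ∀ v : V, (∃ w, j₁ w = v) ∨ (∃ w, j₂ w = v))
    (hident : ∀ i : Fin t,
      j₁ (t₁ (e₁ i)) = j₂ (t₂ (e₂ i)) ∧ j₁ (h₁ (e₁ i)) = j₂ (h₂ (e₂ i)))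
    (hmeet : ∀ (w₁ : V₁) (w₂ : V₂), j₁ w₁ = j₂ w₂ → ∃ i : Fin t,
      (w₁ = t₁ (e₁ i) ∧ w₂ = t₂ (e₂ i)) ∨ (w₁ = h₁ (e₁ i) ∧ w₂ = h₂ (e₂ i)))
    (S : Finset (A₁ ⊕ A₂)) :
    ProperlyBalanced (Sum.elim (j₁ ∘ t₁) (j₂ ∘ t₂)) (Sum.elim (j₁ ∘ h₁) (j₂ ∘ h₂))
      ((fun p : A₁ × A₁ => ((Sum.inl p.1 : A₁ ⊕ A₂), (Sum.inl p.2 : A₁ ⊕ A₂))) '' X₁ ∪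
        (fun p : A₂ × A₂ => ((Sum.inr p.1 : A₁ ⊕ A₂), (Sum.inr p.2 : A₁ ⊕ A₂))) '' X₂ ∪
        {q | ∃ i : Fin t, q = ((Sum.inl (e₁ i) : A₁ ⊕ A₂), (Sum.inr (e₂ i) : A₁ ⊕ A₂))})
      ((fun p : A₁ × A₁ => ((Sum.inl p.1 : A₁ ⊕ A₂), (Sum.inl p.2 : A₁ ⊕ A₂))) '' Y₁ ∪
        (fun p : A₂ × A₂ => ((Sum.inr p.1 : A₁ ⊕ A₂), (Sum.inr p.2 : A₁ ⊕ A₂))) '' Y₂)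
      S ↔
    ((∀ i : Fin t, ((Sum.inl (e₁ i) : A₁ ⊕ A₂) ∈ S ↔ (Sum.inr (e₂ i) : A₁ ⊕ A₂) ∈ S)) ∧
      ProperlyBalanced t₁ h₁ X₁ Y₁
        (Finset.univ.filter fun x : A₁ => (Sum.inl x : A₁ ⊕ A₂) ∈ S) ∧
      ProperlyBalanced t₂ h₂ X₂ Y₂
        (Finset.univ.filter fun x : A₂ => (Sum.inr x : A₁ ⊕ A₂) ∈ S)) := by
  set S₁ := Finset.univ.filter fun x : A₁ => (Sum.inl x : A₁ ⊕ A₂) ∈ S with hS₁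
  set S₂ := Finset.univ.filter fun x : A₂ => (Sum.inr x : A₁ ⊕ A₂) ∈ S with hS₂
  have m₁ : ∀ x, x ∈ S₁ ↔ (Sum.inl x : A₁ ⊕ A₂) ∈ S := by simp [hS₁]
  have m₂ : ∀ x, x ∈ S₂ ↔ (Sum.inr x : A₁ ⊕ A₂) ∈ S := by simp [hS₂]
  have c₁ : ∀ (f : A₁ → V₁) (w : V₁), (S₁.filter fun x => (j₁ ∘ f) x = j₁ w) =
      S₁.filter fun x => f x = w := by
    intro f w; simp [hj₁.eq_iff]
  have c₂ : ∀ (f : A₂ → V₂) (w : V₂), (S₂.filter fun x => (j₂ ∘ f) x = j₂ w) =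
      S₂.filter fun x => f x = w := by
    intro f w; simp [hj₂.eq_iff]
  have z₁ : ∀ (f : A₁ → V₁) (v : V), (¬ ∃ w, j₁ w = v) →
      (S₁.filter fun x => (j₁ ∘ f) x = v) = ∅ := by
    intro f v hv
    exact Finset.filter_eq_empty_iff.2 fun x _ hx => hv ⟨f x, hx⟩
  have z₂ : ∀ (f : A₂ → V₂) (v : V), (¬ ∃ w, j₂ w = v) →
      (S₂.filter fun x => (j₂ ∘ f) x = v) = ∅ := by
    intro f v hv
    exact Finset.filter_eq_empty_iff.2 fun x _ hx => hv ⟨f x, hx⟩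
  have bal : (∀ i : Fin t, ((Sum.inl (e₁ i) : A₁ ⊕ A₂) ∈ S ↔ (Sum.inr (e₂ i) : A₁ ⊕ A₂) ∈ S)) →
      (Balanced (Sum.elim (j₁ ∘ t₁) (j₂ ∘ t₂)) (Sum.elim (j₁ ∘ h₁) (j₂ ∘ h₂)) S ↔
        Balanced t₁ h₁ S₁ ∧ Balanced t₂ h₂ S₂) := by
    intro hd
    have joint : ∀ w₁ w₂, j₁ w₁ = j₂ w₂ →
        ((S₁.filter fun x => t₁ x = w₁).card + (S₂.filter fun x => t₂ x = w₂).card =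
          (S₁.filter fun x => h₁ x = w₁).card + (S₂.filter fun x => h₂ x = w₂).card) →
        (S₁.filter fun x => t₁ x = w₁).card = (S₁.filter fun x => h₁ x = w₁).card ∧
        (S₂.filter fun x => t₂ x = w₂).card = (S₂.filter fun x => h₂ x = w₂).card := by
      intro w₁ w₂ hw hsum
      obtain ⟨i, ⟨rfl, rfl⟩ | ⟨rfl, rfl⟩⟩ := hmeet w₁ w₂ hw
      · obtain ⟨a, b⟩ := hdeg₁ i _ (Or.inl rfl)
        obtain ⟨a', b'⟩ := hdeg₂ i _ (Or.inl rfl)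
        have q₁ := aux_one t₁ (e₁ i) a S₁
        have q₂ := aux_one t₂ (e₂ i) a' S₂
        have r₁ := aux_le h₁ _ b S₁
        have r₂ := aux_le h₂ _ b' S₂
        simp only [m₁, m₂, hd i] at q₁ q₂
        split_ifs at q₁ q₂ <;> omega
      · obtain ⟨a, b⟩ := hdeg₁ i _ (Or.inr rfl)
        obtain ⟨a', b'⟩ := hdeg₂ i _ (Or.inr rfl)
        have q₁ := aux_one h₁ (e₁ i) b S₁
        have q₂ := aux_one h₂ (e₂ i) b' S₂
        have r₁ := aux_le t₁ _ a S₁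
        have r₂ := aux_le t₂ _ a' S₂
        simp only [m₁, m₂, hd i] at q₁ q₂
        split_ifs at q₁ q₂ <;> omega
    constructor
    · intro hB
      constructor
      · intro w
        have h := hB (j₁ w)
        rw [aux_split, aux_split, ← hS₁, ← hS₂, c₁, c₁] at h
        by_cases hw : ∃ w', j₂ w' = j₁ w
        · obtain ⟨w', hw'⟩ := hw
          rw [← hw', c₂, c₂] at h
          exact (joint w w' hw'.symm h).1
        · rw [z₂ _ _ hw, z₂ _ _ hw] at h
          simpa using h
      · intro w
        have h := hB (j₂ w)
        rw [aux_split, aux_split, ← hS₁, ← hS₂, c₂, c₂] at h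
        by_cases hw : ∃ w', j₁ w' = j₂ w
        · obtain ⟨w', hw'⟩ := hw
          rw [← hw', c₁, c₁] at h
          exact (joint w' w hw' h).2
        · rw [z₁ _ _ hw, z₁ _ _ hw] at h
          simpa using h
    · rintro ⟨hB₁, hB₂⟩ v
      rw [aux_split, aux_split, ← hS₁, ← hS₂]
      congr 1
      · by_cases hw : ∃ w, j₁ w = v
        · obtain ⟨w, rfl⟩ := hw
          rw [c₁, c₁]; exact hB₁ w
        · rw [z₁ _ _ hw, z₁ _ _ hw]
      · by_cases hw : ∃ w, j₂ w = v
        · obtain ⟨w, rfl⟩ := hw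
          rw [c₂, c₂]; exact hB₂ w
        · rw [z₂ _ _ hw, z₂ _ _ hw]
  constructor
  · rintro ⟨hB, hD, hF⟩
    have hd : ∀ i : Fin t,
        ((Sum.inl (e₁ i) : A₁ ⊕ A₂) ∈ S ↔ (Sum.inr (e₂ i) : A₁ ⊕ A₂) ∈ S) :=
      fun i => hD _ (Or.inr ⟨i, rfl⟩)
    obtain ⟨hB₁, hB₂⟩ := (bal hd).1 hB
    refine ⟨hd, ⟨hB₁, ?_, ?_⟩, ⟨hB₂, ?_, ?_⟩⟩
    · intro p hp
      rw [m₁, m₁]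
      exact hD _ (Or.inl (Or.inl ⟨p, hp, rfl⟩))
    · intro p hp
      rw [m₁, m₁]
      exact hF _ (Or.inl ⟨p, hp, rfl⟩)
    · intro p hp
      rw [m₂, m₂]
      exact hD _ (Or.inl (Or.inr ⟨p, hp, rfl⟩))
    · intro p hp
      rw [m₂, m₂]
      exact hF _ (Or.inr ⟨p, hp, rfl⟩)
  · rintro ⟨hd, ⟨hB₁, hD₁, hF₁⟩, ⟨hB₂, hD₂, hF₂⟩⟩
    refine ⟨(bal hd).2 ⟨hB₁, hB₂⟩, ?_, ?_⟩
    · rintro _ ((⟨p, hp, rfl⟩ | ⟨p, hp, rfl⟩) | ⟨i, rfl⟩)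
      · have := hD₁ p hp
        rwa [m₁, m₁] at this
      · have := hD₂ p hp
        rwa [m₂, m₂] at this
      · exact hd i
    · rintro _ (⟨p, hp, rfl⟩ | ⟨p, hp, rfl⟩)
      · have := hF₁ p hp
        rwa [m₁, m₁] at this
      · have := hF₂ p hp
        rwa [m₂, m₂] at this

end Stmt3
end

section
/- Let N ≥ 4 be an integer, let n ≥ 1, and let t₁, …, t_n be integers with 2·|t_i| ≤ N for every i ∈ {1,…,n} and t₁ + t₂ + ⋯ + t_n = 0. Then there exists a nonempty subset J ⊆ {1,…,n} with |J| ≤ N − 1 and Σ_{i ∈ J} t_i = 0. -/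
/-- Greedy step: a set with sum in `[1-a, b]` that is not everything can be enlarged by one. -/
lemma zs_step {n : ℕ} (t : Fin n → ℤ) (a b : ℤ) (ha : 1 ≤ a) (hb : 1 ≤ b)
    (hl : ∀ i, -a ≤ t i) (hu : ∀ i, t i ≤ b) (hsum : ∑ i, t i = 0)
    (S : Finset (Fin n)) (hS : S.card < n) (h1 : 1 - a ≤ ∑ i ∈ S, t i)
    (h2 : ∑ i ∈ S, t i ≤ b) :
    ∃ S', S ⊆ S' ∧ S'.card = S.card + 1 ∧ 1 - a ≤ ∑ i ∈ S', t i ∧ ∑ i ∈ S', t i ≤ b := by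
  have hc : ∑ i ∈ S, t i + ∑ i ∈ Sᶜ, t i = 0 := by rw [Finset.sum_add_sum_compl, hsum]
  have hne : Sᶜ.Nonempty := by
    rw [← Finset.card_pos, Finset.card_compl, Fintype.card_fin]; omega
  have key : ∃ x ∈ Sᶜ, 1 - a ≤ t x + ∑ i ∈ S, t i ∧ t x + ∑ i ∈ S, t i ≤ b := by
    by_cases hp : 0 < ∑ i ∈ S, t i
    · obtain ⟨x, hx, hx0⟩ : ∃ x ∈ Sᶜ, t x < 0 := by
        by_contra! h
        have := Finset.sum_nonneg h
        omega
      exact ⟨x, hx, by have := hl x; omega, by omega⟩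
    · obtain ⟨x, hx, hx0⟩ : ∃ x ∈ Sᶜ, 0 ≤ t x := by
        by_contra! h
        have := Finset.sum_neg h hne
        omega
      exact ⟨x, hx, by omega, by have := hu x; omega⟩
  obtain ⟨x, hx, hx1, hx2⟩ := key
  have hx' : x ∉ S := by simpa using hx
  refine ⟨insert x S, Finset.subset_insert _ _, Finset.card_insert_of_notMem hx', ?_, ?_⟩ <;>
    rwa [Finset.sum_insert hx']

lemma zs_main {n : ℕ} (hn : 1 ≤ n) (t : Fin n → ℤ) (a b : ℤ) (ha : 1 ≤ a) (hb : 1 ≤ b)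
    (hl : ∀ i, -a ≤ t i) (hu : ∀ i, t i ≤ b) (hsum : ∑ i, t i = 0) :
    ∃ J : Finset (Fin n), J.Nonempty ∧ (J.card : ℤ) ≤ a + b ∧ ∑ i ∈ J, t i = 0 := by
  by_cases hle : (n : ℤ) ≤ a + b
  · exact ⟨Finset.univ, ⟨⟨0, hn⟩, Finset.mem_univ _⟩, by simpa using hle, hsum⟩
  have step : ∀ S : Finset (Fin n), ∃ S', S ⊆ S' ∧ (S.card < n → 1 - a ≤ ∑ i ∈ S, t i →
      ∑ i ∈ S, t i ≤ b → S'.card = S.card + 1 ∧ 1 - a ≤ ∑ i ∈ S', t i ∧ ∑ i ∈ S', t i ≤ b) := by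
    intro S
    by_cases h : S.card < n ∧ 1 - a ≤ ∑ i ∈ S, t i ∧ ∑ i ∈ S, t i ≤ b
    · obtain ⟨S', h1, h2⟩ := zs_step t a b ha hb hl hu hsum S h.1 h.2.1 h.2.2
      exact ⟨S', h1, fun _ _ _ => h2⟩
    · exact ⟨S, subset_rfl, fun h1 h2 h3 => absurd ⟨h1, h2, h3⟩ h⟩
  choose F hF1 hF2 using step
  let C : ℕ → Finset (Fin n) := fun k => Nat.rec ∅ (fun _ S => F S) k
  have hmono : Monotone C := monotone_nat_of_le_succ fun k => hF1 (C k)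
  have hinv : ∀ k, k ≤ n → (C k).card = k ∧ 1 - a ≤ ∑ i ∈ C k, t i ∧ ∑ i ∈ C k, t i ≤ b := by
    intro k
    induction k with
    | zero =>
      intro _
      have h0 : C 0 = ∅ := rfl
      rw [h0, Finset.card_empty, Finset.sum_empty]
      omega
    | succ k ih =>
      intro hk
      obtain ⟨h1, h2, h3⟩ := ih (by omega)
      have := hF2 (C k) (by omega) h2 h3
      rw [h1] at this
      exact this
  obtain ⟨m, hm⟩ : ∃ m : ℕ, (m : ℤ) = a + b := ⟨(a + b).toNat, by omega⟩
  have hpig : ∃ i ∈ Finset.range (m + 1), ∃ j ∈ Finset.range (m + 1), i ≠ j ∧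
      ∑ x ∈ C i, t x = ∑ x ∈ C j, t x := by
    apply Finset.exists_ne_map_eq_of_card_lt_of_maps_to (t := Finset.Icc (1 - a) b)
    · simp only [Int.card_Icc, Finset.card_range]; omega
    · intro i hi
      have hi' : i < m + 1 := by simpa using hi
      have := hinv i (by omega)
      simpa using this.2
  have fin : ∀ i j, i < j → j ≤ m → ∑ x ∈ C i, t x = ∑ x ∈ C j, t x →
      ∃ J : Finset (Fin n), J.Nonempty ∧ (J.card : ℤ) ≤ a + b ∧ ∑ i ∈ J, t i = 0 := by
    intro i j hij hj he
    have hsub : C i ⊆ C j := hmono hij.le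
    have h1 := (hinv i (by omega)).1
    have h2 := (hinv j (by omega)).1
    have h3 := Finset.card_sdiff_of_subset hsub
    have h4 := Finset.sum_sdiff (f := t) hsub
    refine ⟨C j \ C i, ?_, by omega, by omega⟩
    rw [← Finset.card_pos]; omega
  obtain ⟨i, hi, j, hj, hne, he⟩ := hpig
  rw [Finset.mem_range] at hi hj
  rcases lt_or_gt_of_ne hne with h | h
  · exact fin i j h (by omega) he
  · exact fin j i h (by omega) he.symm

/-- Let `N ≥ 4` be an integer, `n ≥ 1`, and `t₁, …, t_n` integers with
`2·|t_i| ≤ N` for every `i` and `t₁ + ⋯ + t_n = 0`. Then there exists a nonempty subset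
`J ⊆ {1,…,n}` with `|J| ≤ N − 1` and `Σ_{i ∈ J} t_i = 0`. -/
theorem zero_sum_small_subset (N : ℤ) (hN : 4 ≤ N) (n : ℕ) (hn : 1 ≤ n)
    (t : Fin n → ℤ) (hbound : ∀ i, 2 * |t i| ≤ N) (hsum : ∑ i, t i = 0) :
    ∃ J : Finset (Fin n), J.Nonempty ∧ (J.card : ℤ) ≤ N - 1 ∧ ∑ i ∈ J, t i = 0 := by
  obtain ⟨M, hM⟩ : ∃ M, M = N / 2 := ⟨_, rfl⟩
  have hlo : ∀ i, -M ≤ t i := fun i => by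
    have := hbound i; have := neg_abs_le (t i); omega
  have hhi : ∀ i, t i ≤ M := fun i => by
    have := hbound i; have := le_abs_self (t i); omega
  by_cases h1 : ∃ i, t i = -M
  · by_cases h2 : ∃ j, t j = M
    · obtain ⟨i, hi⟩ := h1
      obtain ⟨j, hj⟩ := h2
      have hij : i ≠ j := by rintro rfl; omega
      refine ⟨{i, j}, by simp, ?_, ?_⟩
      · rw [Finset.card_pair hij]; push_cast; omega
      · rw [Finset.sum_pair hij]; omega
    · push Not at h2
      obtain ⟨J, hJ, hc, hs⟩ := zs_main hn t M (M - 1) (by omega) (by omega) hlo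
        (fun i => by have := hhi i; have := h2 i; omega) hsum
      exact ⟨J, hJ, by omega, hs⟩
  · push Not at h1
    obtain ⟨J, hJ, hc, hs⟩ := zs_main hn t (M - 1) M (by omega) (by omega)
      (fun i => by have := hlo i; have := h1 i; omega) hhi hsum
    exact ⟨J, hJ, by omega, hs⟩
end

section
/- Let G = (V, E ∪ A) be a strongly connected mixed graph with V nonempty, and let m = |E| + |A| be the total number of edges and arcs. Then there exists a closed walk of G that traverses every edge and every arc of G at least once, and traverses each edge and each arc at most m + 1 times. -/
namespace Stmt7

/-- A walk in a mixed graph with vertex set `V`, edge set `E` (an edge `e` has endpoints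
`e1 e` and `e2 e` and may be traversed in either direction) and arc set `A` (an arc `a`
goes from `ta a` to `ha a`).  `MWalk e1 e2 ta ha x y` is a walk from `x` to `y`. -/
inductive MWalk {V E A : Type} (e1 e2 : E → V) (ta ha : A → V) : V → V → Type
  | nil (v : V) : MWalk e1 e2 ta ha v v
  | edgeF (e : E) {y : V} (w : MWalk e1 e2 ta ha (e2 e) y) : MWalk e1 e2 ta ha (e1 e) y
  | edgeB (e : E) {y : V} (w : MWalk e1 e2 ta ha (e1 e) y) : MWalk e1 e2 ta ha (e2 e) y
  | arc (a : A) {y : V} (w : MWalk e1 e2 ta ha (ha a) y) : MWalk e1 e2 ta ha (ta a) y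

variable {V E A : Type} {e1 e2 : E → V} {ta ha : A → V}

/-- The number of times a walk traverses the edge `f` (in either direction). -/
def countE [DecidableEq E] : ∀ {x y : V}, MWalk e1 e2 ta ha x y → E → ℕ
  | _, _, .nil _, _ => 0
  | _, _, .edgeF e w, f => (if e = f then 1 else 0) + countE w f
  | _, _, .edgeB e w, f => (if e = f then 1 else 0) + countE w f
  | _, _, .arc _ w, f => countE w f

/-- The number of times a walk traverses the arc `b`. -/
def countA [DecidableEq A] : ∀ {x y : V}, MWalk e1 e2 ta ha x y → A → ℕ
  | _, _, .nil _, _ => 0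
  | _, _, .edgeF _ w, b => countA w b
  | _, _, .edgeB _ w, b => countA w b
  | _, _, .arc a w, b => (if a = b then 1 else 0) + countA w b

/-- Abstract walks recorded with their traversal counts. -/
inductive AW {X F : Type} [DecidableEq F] (St : F → X → X → Prop) : (F → ℕ) → X → X → Prop
  | nil (v : X) : AW St 0 v v
  | step (f : F) {x y z : X} {c : F → ℕ} (h : St f x y) (w : AW St c y z) :
      AW St (Pi.single f 1 + c) x z

section abstractWalks

theorem AW.append {X F : Type} [DecidableEq F] {St : F → X → X → Prop} {c d : F → ℕ} {x y z : X}
    (h : AW St c x y) (h' : AW St d y z) : AW St (c + d) x z := by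
  induction h with
  | nil v => simpa using h'
  | step f h w ih => rw [add_assoc]; exact AW.step f h (ih h')

theorem AW.split {X F : Type} [DecidableEq F] {St : F → X → X → Prop} {c : F → ℕ} {x y : X}
    (h : AW St c x y) (f : F) (hf : 1 ≤ c f) :
    ∃ a b c1 c2, AW St c1 x a ∧ St f a b ∧ AW St c2 b y ∧ c = c1 + Pi.single f 1 + c2 ∧
      c1 f = 0 := by
  induction h with
  | nil v => simp at hf
  | @step g x y z c h w ih =>
    by_cases hg : g = f
    · subst hg
      exact ⟨x, y, 0, c, AW.nil x, h, w, by simp, rfl⟩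
    · have h0 : (Pi.single g 1 : F → ℕ) f = 0 := by
        rw [Pi.single_apply, if_neg (Ne.symm hg)]
      obtain ⟨a, b, c1, c2, h1, h2, h3, h4, h5⟩ := ih (by
        rw [Pi.add_apply, h0] at hf; omega)
      refine ⟨a, b, Pi.single g 1 + c1, c2, AW.step g h h1, h2, h3, ?_, ?_⟩
      · rw [h4]; simp only [add_assoc]
      · rw [Pi.add_apply, h0, h5]

theorem AW.short {X F : Type} [DecidableEq F] [Fintype F] {St : F → X → X → Prop}
    (hSt : ∀ f x y x' y', St f x y → St f x' y' → (x' = x ∧ y' = y) ∨ (x' = y ∧ y' = x))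
    {x y : X} (n : ℕ) : ∀ c : F → ℕ, AW St c x y → ∑ f, c f = n →
    ∃ c', AW St c' x y ∧ ∀ f, c' f ≤ 1 := by
  induction n using Nat.strong_induction_on with
  | _ n ih =>
    intro c hc hn
    by_cases hle : ∀ f, c f ≤ 1
    · exact ⟨c, hc, hle⟩
    push Not at hle
    obtain ⟨f, hf⟩ := hle
    obtain ⟨a, b, c1, c2, h1, h2, h3, h4, h5⟩ := hc.split f (by omega)
    have hc2 : 1 ≤ c2 f := by
      rw [h4] at hf
      simp only [Pi.add_apply, Pi.single_eq_same] at hf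
      omega
    obtain ⟨a', b', c3, c4, k1, k2, k3, k4, -⟩ := h3.split f hc2
    have hs : ∑ g, (Pi.single f 1 : F → ℕ) g = 1 := by simp
    have htot : (∑ g, c1 g) + 1 + ((∑ g, c3 g) + 1 + ∑ g, c4 g) = n := by
      rw [← hn, h4, k4]
      simp only [Pi.add_apply, Finset.sum_add_distrib, hs]
    rcases hSt f a b a' b' h2 k2 with ⟨rfl, rfl⟩ | ⟨rfl, rfl⟩
    · refine ih _ ?_ (c1 + (Pi.single f 1 + c4)) (h1.append (AW.step f k2 k3)) rfl
      simp only [Pi.add_apply, Finset.sum_add_distrib, hs]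
      omega
    · refine ih _ ?_ (c1 + c4) (h1.append k3) rfl
      simp only [Pi.add_apply, Finset.sum_add_distrib]
      omega

theorem AW.main {X F : Type} [Nonempty X] [DecidableEq F] [Fintype F] {St : F → X → X → Prop}
    (hSt : ∀ f x y x' y', St f x y → St f x' y' → (x' = x ∧ y' = y) ∨ (x' = y ∧ y' = x))
    (hex : ∀ f, ∃ x y, St f x y) (hconn : ∀ x y, ∃ c, AW St c x y) (k : ℕ)
    (hk : k ≤ Fintype.card F) :
    ∃ (S : Finset F) (c : F → ℕ) (v : X), S.card = k ∧ AW St c v v ∧ (∀ f ∈ S, 1 ≤ c f) ∧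
      ∀ f, c f ≤ k + if f ∈ S then 1 else 0 := by
  induction k with
  | zero =>
    obtain ⟨v⟩ := ‹Nonempty X›
    exact ⟨∅, 0, v, rfl, AW.nil v, by simp, by simp⟩
  | succ k ih =>
    obtain ⟨S, c, v, hS, hc, hcov, hub⟩ := ih (by omega)
    have hrot : ∀ f x y, f ∈ S → St f x y → AW St c y y := by
      intro f x y hf hxy
      obtain ⟨a, b, c1, c2, h1, h2, h3, h4, -⟩ := hc.split f (hcov f hf)
      have ha : AW St c a a := by
        have := AW.step f h2 (h3.append h1)
        convert this using 1
        rw [h4]; abel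
      have hb : AW St c b b := by
        have := h3.append (h1.append (AW.step f h2 (AW.nil b)))
        convert this using 1
        rw [h4, add_zero]; abel
      rcases hSt f a b x y h2 hxy with ⟨rfl, rfl⟩ | ⟨rfl, rfl⟩
      · exact hb
      · exact ha
    have hclaim : ∃ g x y, g ∉ S ∧ St g x y ∧ AW St c x x := by
      by_contra hno
      push Not at hno
      have hall : ∀ d u z, AW St d u z → AW St c u u → AW St c z z := by
        intro d u z hd
        induction hd with
        | nil v => exact id
        | @step f x y z d h w ihw =>
          intro hx
          apply ihw
          by_cases hf : f ∈ S
          · exact hrot f x y hf h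
          · exact absurd hx (hno f x y hf h)
      obtain ⟨g, hg⟩ : ∃ g, g ∉ S := by
        by_contra hall'
        push Not at hall'
        have : S = Finset.univ := Finset.eq_univ_iff_forall.2 hall'
        rw [this, Finset.card_univ] at hS
        omega
      obtain ⟨x, y, hxy⟩ := hex g
      obtain ⟨d, hd⟩ := hconn v x
      exact hno g x y hg hxy (hall d v x hd hc)
    obtain ⟨g, x, y, hg, hxy, hx⟩ := hclaim
    obtain ⟨d0, hd0⟩ := hconn y x
    obtain ⟨d, hd, hd1⟩ := AW.short hSt _ d0 hd0 rfl
    refine ⟨insert g S, c + (Pi.single g 1 + d), x, ?_, hx.append (AW.step g hxy hd), ?_, ?_⟩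
    · rw [Finset.card_insert_of_notMem hg, hS]
    · intro f hf
      rcases Finset.mem_insert.1 hf with rfl | hf
      · simp only [Pi.add_apply, Pi.single_eq_same]; omega
      · have := hcov f hf
        simp only [Pi.add_apply]; omega
    · intro f
      have h1 := hub f
      have h2 := hd1 f
      by_cases hfg : f = g
      · subst hfg
        simp only [hg, if_false, Finset.mem_insert_self, if_true, Pi.add_apply,
          Pi.single_eq_same] at *
        omega
      · simp only [Finset.mem_insert, hfg, false_or, Pi.add_apply, Pi.single_apply, if_false]
        omega

end abstractWalks

/-- The steps of a mixed graph. -/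
def MSt {V E A : Type} (e1 e2 : E → V) (ta ha : A → V) : E ⊕ A → V → V → Prop
  | .inl e, x, y => (x = e1 e ∧ y = e2 e) ∨ (x = e2 e ∧ y = e1 e)
  | .inr a, x, y => x = ta a ∧ y = ha a

theorem AW.ofWalk {V E A : Type} [DecidableEq E] [DecidableEq A] {e1 e2 : E → V} {ta ha : A → V}
    {x y : V} (w : MWalk e1 e2 ta ha x y) : ∃ c, AW (MSt e1 e2 ta ha) c x y := by
  induction w with
  | nil v => exact ⟨0, AW.nil v⟩
  | edgeF e w ih =>
    obtain ⟨c, hc⟩ := ih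
    exact ⟨_, AW.step (Sum.inl e) (Or.inl ⟨rfl, rfl⟩) hc⟩
  | edgeB e w ih =>
    obtain ⟨c, hc⟩ := ih
    exact ⟨_, AW.step (Sum.inl e) (Or.inr ⟨rfl, rfl⟩) hc⟩
  | arc a w ih =>
    obtain ⟨c, hc⟩ := ih
    exact ⟨_, AW.step (Sum.inr a) ⟨rfl, rfl⟩ hc⟩

theorem AW.toWalk {V E A : Type} [DecidableEq E] [DecidableEq A] {e1 e2 : E → V} {ta ha : A → V}
    {c : E ⊕ A → ℕ} {x y : V} (h : AW (MSt e1 e2 ta ha) c x y) :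
    ∃ w : MWalk e1 e2 ta ha x y, (∀ e, countE w e = c (Sum.inl e)) ∧
      ∀ a, countA w a = c (Sum.inr a) := by
  induction h with
  | nil v => exact ⟨.nil v, fun _ => rfl, fun _ => rfl⟩
  | step f h _ ih =>
    obtain ⟨w, hE, hA⟩ := ih
    rcases f with e | a
    · rcases h with ⟨rfl, rfl⟩ | ⟨rfl, rfl⟩
      · refine ⟨.edgeF e w, fun f => ?_, fun b => ?_⟩
        · simp [countE, hE, Pi.single_apply, eq_comm]
        · simp [countA, hA, Pi.single_apply]
      · refine ⟨.edgeB e w, fun f => ?_, fun b => ?_⟩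
        · simp [countE, hE, Pi.single_apply, eq_comm]
        · simp [countA, hA, Pi.single_apply]
    · obtain ⟨rfl, rfl⟩ := h
      refine ⟨.arc a w, fun f => ?_, fun b => ?_⟩
      · simp [countE, hE, Pi.single_apply]
      · simp [countA, hA, Pi.single_apply, eq_comm]

/-- Let `G = (V, E ∪ A)` be a strongly connected mixed graph with `V`
nonempty and `m = |E| + |A|`.  Then there exists a closed walk of `G` traversing every
edge and arc at least once, and each edge and arc at most `m + 1` times. -/
theorem chinese_postman_naive_bound [Fintype V] [Nonempty V] [DecidableEq V]
    [Fintype E] [DecidableEq E] [Fintype A] [DecidableEq A]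
    (e1 e2 : E → V) (ta ha : A → V)
    (hstrong : ∀ x y : V, Nonempty (MWalk e1 e2 ta ha x y)) :
    ∃ (v : V) (w : MWalk e1 e2 ta ha v v),
      (∀ e : E, 1 ≤ countE w e ∧ countE w e ≤ Fintype.card E + Fintype.card A + 1) ∧
      (∀ a : A, 1 ≤ countA w a ∧ countA w a ≤ Fintype.card E + Fintype.card A + 1) := by
  have hSt : ∀ f x y x' y', MSt e1 e2 ta ha f x y → MSt e1 e2 ta ha f x' y' →
      (x' = x ∧ y' = y) ∨ (x' = y ∧ y' = x) := by
    rintro (e | a) x y x' y' h h'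
    · rcases h with ⟨rfl, rfl⟩ | ⟨rfl, rfl⟩ <;> rcases h' with ⟨rfl, rfl⟩ | ⟨rfl, rfl⟩ <;> simp
    · obtain ⟨rfl, rfl⟩ := h
      exact Or.inl h'
  have hex : ∀ f, ∃ x y, MSt e1 e2 ta ha f x y := by
    rintro (e | a)
    · exact ⟨_, _, Or.inl ⟨rfl, rfl⟩⟩
    · exact ⟨_, _, rfl, rfl⟩
  obtain ⟨S, c, v, hS, hc, hcov, hub⟩ := AW.main hSt hex
    (fun x y => (hstrong x y).elim AW.ofWalk) _ le_rfl
  have hu : S = Finset.univ := (Finset.card_eq_iff_eq_univ S).1 hS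
  subst hu
  obtain ⟨w, hE, hA⟩ := hc.toWalk
  simp only [Finset.mem_univ, if_true, Fintype.card_sum, forall_true_left] at hcov hub
  refine ⟨v, w, fun e => ?_, fun a => ?_⟩
  · rw [hE]; exact ⟨hcov _, hub _⟩
  · rw [hA]; exact ⟨hcov _, hub _⟩

end Stmt7
end

section
/- Let u, v be two vertices, let M ≥ 1 and 1 ≤ t ≤ M be integers, and let D_uv be the weighted directed multigraph on {u, v} consisting of: a double arc (a, a') where a and a' are two arcs from v to u, each of weight 0; t − 1 further arcs from v to u, each of weight −1; M − t arcs from u to v, each of weight +1; and M − 1 further arcs from v to u, each of weight +1. Let W and B be integers with t + W ≤ M. Then the following are equivalent: (1) there exist integers p ≥ 0 and q ≥ 0 with p + q ≥ 1, p + q = t + W and p − q = t + B (i.e., there is a two-vertex multigraph on {u, v} covering the edge between u and v, of weight t + W and imbalance t + B at u); (2) there is a subset S of the arcs of D_uv containing either both or neither of a, a', whose total weight is W and whose imbalance at u equals B. -/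
namespace Stmt9

/-- Arcs of the gadget `D_uv` for an edge `uv` traversed `t` times from `u` to `v` and
`0` times from `v` to `u`:
* `Sum.inl` indexes the double arc `(a, a')`: two arcs from `v` to `u` of weight `0`;
* `Sum.inr (Sum.inl _)`: the `t − 1` arcs from `v` to `u` of weight `−1`;
* `Sum.inr (Sum.inr (Sum.inl _))`: the `M − t` arcs from `u` to `v` of weight `+1`;
* `Sum.inr (Sum.inr (Sum.inr _))`: the `M − 1` arcs from `v` to `u` of weight `+1`.
Vertices are encoded by `Bool`: `false = u`, `true = v`. -/
abbrev Arc (M t : ℕ) := Fin 2 ⊕ (Fin (t - 1) ⊕ (Fin (M - t) ⊕ Fin (M - 1)))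

/-- Tail of an arc (`false = u`, `true = v`). -/
def tl {M t : ℕ} : Arc M t → Bool :=
  Sum.elim (fun _ => true)
    (Sum.elim (fun _ => true) (Sum.elim (fun _ => false) (fun _ => true)))

/-- Head of an arc (`false = u`, `true = v`). -/
def hd {M t : ℕ} : Arc M t → Bool :=
  Sum.elim (fun _ => false)
    (Sum.elim (fun _ => false) (Sum.elim (fun _ => true) (fun _ => false)))

/-- Weight of an arc. -/
def wt {M t : ℕ} : Arc M t → ℤ :=
  Sum.elim (fun _ => 0)
    (Sum.elim (fun _ => -1) (Sum.elim (fun _ => 1) (fun _ => 1)))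

/-- Imbalance of an arc subset `S` at `u`. -/
def imb {M t : ℕ} (S : Finset (Arc M t)) : ℤ :=
  ((S.filter fun a => tl a = false).card : ℤ) -
    ((S.filter fun a => hd a = false).card : ℤ)

theorem wt_disjSum {M t : ℕ} (D : Finset (Fin 2)) (X : Finset (Fin (t - 1)))
    (Y : Finset (Fin (M - t))) (Z : Finset (Fin (M - 1))) :
    (∑ a ∈ (D.disjSum (X.disjSum (Y.disjSum Z)) : Finset (Arc M t)), wt a)
      = -(X.card : ℤ) + Y.card + Z.card := by
  simp [Finset.sum_disjSum, wt]
  try ring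

theorem imb_disjSum {M t : ℕ} (D : Finset (Fin 2)) (X : Finset (Fin (t - 1)))
    (Y : Finset (Fin (M - t))) (Z : Finset (Fin (M - 1))) :
    imb (D.disjSum (X.disjSum (Y.disjSum Z)) : Finset (Arc M t))
      = (Y.card : ℤ) - D.card - X.card - Z.card := by
  unfold imb
  rw [Finset.card_filter, Finset.card_filter]
  simp [Finset.sum_disjSum, tl, hd]
  try ring

theorem exists_of_counts {M t : ℕ} (D : Finset (Fin 2)) (hD : 0 ∈ D ↔ 1 ∈ D) (x y z : ℕ)
    (hx : x ≤ t - 1) (hy : y ≤ M - t) (hz : z ≤ M - 1) (W B : ℤ)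
    (hW : W = -(x : ℤ) + y + z) (hB : B = (y : ℤ) - D.card - x - z) :
    ∃ S : Finset (Arc M t),
      ((Sum.inl 0 : Arc M t) ∈ S ↔ (Sum.inl 1 : Arc M t) ∈ S) ∧
      (∑ a ∈ S, wt a) = W ∧ imb S = B := by
  obtain ⟨X, -, hX⟩ := Finset.exists_subset_card_eq
    (s := (Finset.univ : Finset (Fin (t - 1)))) (n := x) (by simpa using hx)
  obtain ⟨Y, -, hY⟩ := Finset.exists_subset_card_eq
    (s := (Finset.univ : Finset (Fin (M - t)))) (n := y) (by simpa using hy)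
  obtain ⟨Z, -, hZ⟩ := Finset.exists_subset_card_eq
    (s := (Finset.univ : Finset (Fin (M - 1)))) (n := z) (by simpa using hz)
  refine ⟨D.disjSum (X.disjSum (Y.disjSum Z)), ?_, ?_, ?_⟩
  · simpa using hD
  · rw [wt_disjSum, hX, hY, hZ, hW]
  · rw [imb_disjSum, hX, hY, hZ, hB]

theorem card_double : ∀ D : Finset (Fin 2), (0 ∈ D ↔ 1 ∈ D) → D.card = 0 ∨ D.card = 2 := by
  decide

/-- For integers `M ≥ 1`, `1 ≤ t ≤ M` and `W, B` with `t + W ≤ M`, the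
following are equivalent:
(1) there are integers `p, q ≥ 0` with `p + q ≥ 1`, `p + q = t + W` and `p − q = t + B`
    (a two-vertex multigraph on `{u,v}` covering the edge between `u` and `v`, of weight
    `t + W` and imbalance `t + B` at `u`);
(2) there is a subset `S` of the arcs of `D_uv` containing either both or neither arc of
    the double arc, of total weight `W` and imbalance `B` at `u`. -/
theorem edge_gadget_equiv (M t : ℕ) (hM : 1 ≤ M) (ht : 1 ≤ t) (htM : t ≤ M)
    (W B : ℤ) (hW : (t : ℤ) + W ≤ (M : ℤ)) :
    (∃ p q : ℤ, 0 ≤ p ∧ 0 ≤ q ∧ 1 ≤ p + q ∧ p + q = (t : ℤ) + W ∧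
      p - q = (t : ℤ) + B) ↔
    (∃ S : Finset (Arc M t),
      ((Sum.inl 0 : Arc M t) ∈ S ↔ (Sum.inl 1 : Arc M t) ∈ S) ∧
      (∑ a ∈ S, wt a) = W ∧ imb S = B) := by
  constructor
  · rintro ⟨p, q, hp, hq, h1, hs, hd⟩
    lift p to ℕ using hp
    lift q to ℕ using hq
    rcases Nat.eq_zero_or_pos q with h0 | h0
    · refine exists_of_counts ∅ (by simp) (t - p) (p - t) 0 ?_ ?_ ?_ W B ?_ ?_ <;>
        (try simp only [Finset.card_empty]) <;> omega
    · refine exists_of_counts Finset.univ (by simp) (t - 1 - p) (p - (t - 1)) (q - 1)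
        ?_ ?_ ?_ W B ?_ ?_ <;>
        (try simp only [Finset.card_univ, Fintype.card_fin]) <;> omega
  · rintro ⟨S, hS, hw, hb⟩
    obtain ⟨D, X, Y, Z, rfl⟩ : ∃ D X Y Z, S = Finset.disjSum D (Finset.disjSum X
        (Finset.disjSum Y Z)) :=
      ⟨S.toLeft, S.toRight.toLeft, S.toRight.toRight.toLeft, S.toRight.toRight.toRight, by
        simp only [Finset.toLeft_disjSum_toRight]⟩
    rw [wt_disjSum] at hw
    rw [imb_disjSum] at hb
    have hD := card_double D (by simpa using hS)
    have hX := Finset.card_le_univ X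
    rw [Fintype.card_fin] at hX
    rcases hD with hD | hD
    · refine ⟨t - X.card + Y.card, Z.card, ?_, ?_, ?_, ?_, ?_⟩ <;> omega
    · refine ⟨t - 1 - X.card + Y.card, Z.card + 1, ?_, ?_, ?_, ?_, ?_⟩ <;> omega

end Stmt9
end

section
/- Let u, v be two vertices, let M ≥ 2 be an integer, and let D_uv be the weighted directed multigraph on {u, v} consisting of: M − 1 arcs from u to v, each of weight +1; M − 1 arcs from v to u, each of weight +1; and a forbidden pair (a, a') where a is an arc from u to v of weight −1 and a' is an arc from v to u of weight −1. Let W and B be integers with 2 + W ≤ M. Then the following are equivalent: (1) there exist integers p ≥ 0 and q ≥ 0 with p + q ≥ 1, p + q = 2 + W and p − q = B (i.e., there is a two-vertex multigraph on {u, v} covering the edge between u and v, of weight 2 + W and imbalance B at u); (2) there is a subset S of the arcs of D_uv containing at most one of a, a', whose total weight is W and whose imbalance at u equals B. -/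
namespace Stmt10

/-- Arcs of the gadget `D_uv` for an edge `uv` traversed once in each direction:
* `Sum.inl _`: the `M − 1` arcs from `u` to `v` of weight `+1`;
* `Sum.inr (Sum.inl _)`: the `M − 1` arcs from `v` to `u` of weight `+1`;
* `Sum.inr (Sum.inr false)`: the arc `a` from `u` to `v` of weight `−1`;
* `Sum.inr (Sum.inr true)`: the arc `a'` from `v` to `u` of weight `−1`;
`(a, a')` is a forbidden pair.  Vertices are encoded by `Bool`: `false = u`, `true = v`. -/
abbrev Arc (M : ℕ) := Fin (M - 1) ⊕ (Fin (M - 1) ⊕ Bool)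

/-- Tail of an arc (`false = u`, `true = v`). -/
def tl {M : ℕ} : Arc M → Bool :=
  Sum.elim (fun _ => false) (Sum.elim (fun _ => true) (fun b => b))

/-- Head of an arc (`false = u`, `true = v`). -/
def hd {M : ℕ} : Arc M → Bool :=
  Sum.elim (fun _ => true) (Sum.elim (fun _ => false) (fun b => !b))

/-- Weight of an arc. -/
def wt {M : ℕ} : Arc M → ℤ :=
  Sum.elim (fun _ => 1) (Sum.elim (fun _ => 1) (fun _ => -1))

/-- Imbalance of an arc subset `S` at `u`. -/
def imb {M : ℕ} (S : Finset (Arc M)) : ℤ :=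
  ((S.filter fun a => tl a = false).card : ℤ) -
    ((S.filter fun a => hd a = false).card : ℤ)

lemma wt_disj {M : ℕ} (X Y : Finset (Fin (M - 1))) (C : Finset Bool) :
    (∑ a ∈ (X.disjSum (Y.disjSum C) : Finset (Arc M)), wt a) = X.card + Y.card - C.card := by
  simp [Finset.sum_disjSum, wt]
  ring

lemma imb_disj {M : ℕ} (X Y : Finset (Fin (M - 1))) (C : Finset Bool) :
    imb (X.disjSum (Y.disjSum C) : Finset (Arc M)) =
      X.card - Y.card + (C.filter fun b => b = false).card
        - (C.filter fun b => b = true).card := by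
  unfold imb
  rw [Finset.card_filter, Finset.card_filter, Finset.sum_disjSum, Finset.sum_disjSum,
    Finset.sum_disjSum, Finset.sum_disjSum]
  have e1 : ∑ b ∈ C, (if tl (Sum.inr (Sum.inr b) : Arc M) = false then 1 else 0)
      = (C.filter fun b => b = false).card := by
    rw [Finset.card_filter]; rfl
  have e2 : ∑ b ∈ C, (if hd (Sum.inr (Sum.inr b) : Arc M) = false then 1 else 0)
      = (C.filter fun b => b = true).card := by
    rw [Finset.card_filter]
    refine Finset.sum_congr rfl fun b _ => ?_
    cases b <;> rfl
  rw [e1, e2]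
  simp only [tl, hd, Sum.elim_inl, Sum.elim_inr, Finset.sum_const]
  push_cast
  simp only [smul_eq_mul, mul_one, Finset.sum_const_zero]
  push_cast
  ring

lemma exists_sub {n : ℕ} (x : ℤ) (h0 : 0 ≤ x) (h : x ≤ n) :
    ∃ X : Finset (Fin n), (X.card : ℤ) = x := by
  obtain ⟨k, rfl⟩ := Int.eq_ofNat_of_zero_le h0
  obtain ⟨X, -, hX⟩ := Finset.exists_subset_card_eq
    (s := (Finset.univ : Finset (Fin n))) (n := k) (by simpa using h)
  exact ⟨X, by simp [hX]⟩

/-- For integers `M ≥ 2` and `W, B` with `2 + W ≤ M`, the following are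
equivalent:
(1) there are integers `p, q ≥ 0` with `p + q ≥ 1`, `p + q = 2 + W` and `p − q = B`
    (a two-vertex multigraph on `{u,v}` covering the edge between `u` and `v`, of weight
    `2 + W` and imbalance `B` at `u`);
(2) there is a subset `S` of the arcs of `D_uv` containing at most one of `a, a'`, of
    total weight `W` and imbalance `B` at `u`. -/
theorem forbidden_pair_gadget_equiv (M : ℕ) (hM : 2 ≤ M)
    (W B : ℤ) (hW : 2 + W ≤ (M : ℤ)) :
    (∃ p q : ℤ, 0 ≤ p ∧ 0 ≤ q ∧ 1 ≤ p + q ∧ p + q = 2 + W ∧ p - q = B) ↔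
    (∃ S : Finset (Arc M),
      ¬((Sum.inr (Sum.inr false) : Arc M) ∈ S ∧ (Sum.inr (Sum.inr true) : Arc M) ∈ S) ∧
      (∑ a ∈ S, wt a) = W ∧ imb S = B) := by
  have key : ∀ (x y : ℤ) (C : Finset Bool), 0 ≤ x → 0 ≤ y → x < M → y < M →
      ¬ (false ∈ C ∧ true ∈ C) → x + y - C.card = W →
      x - y + (C.filter fun b => b = false).card - (C.filter fun b => b = true).card = B →
      (∃ S : Finset (Arc M),
      ¬((Sum.inr (Sum.inr false) : Arc M) ∈ S ∧ (Sum.inr (Sum.inr true) : Arc M) ∈ S) ∧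
      (∑ a ∈ S, wt a) = W ∧ imb S = B) := by
    intro x y C hx hy hxM hyM hC h1 h2
    obtain ⟨X, hX⟩ := exists_sub (n := M - 1) x hx (by omega)
    obtain ⟨Y, hY⟩ := exists_sub (n := M - 1) y hy (by omega)
    refine ⟨X.disjSum (Y.disjSum C), by simpa using hC, ?_, ?_⟩
    · rw [wt_disj, hX, hY, h1]
    · rw [imb_disj, hX, hY, h2]
  constructor
  · rintro ⟨p, q, hp, hq, h1, h2, h3⟩
    by_cases hp0 : p = 0
    · refine key 0 (q - 1) {true} le_rfl (by omega) (by omega) (by omega) (by simp) ?_ ?_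
      · simp; omega
      · simp [Finset.filter_singleton]; omega
    by_cases hq0 : q = 0
    · refine key (p - 1) 0 {false} (by omega) le_rfl (by omega) (by omega) (by simp) ?_ ?_
      · simp; omega
      · simp [Finset.filter_singleton]; omega
    · refine key (p - 1) (q - 1) ∅ (by omega) (by omega) (by omega) (by omega) (by simp) ?_ ?_
      · simp; omega
      · simp; omega
  · rintro ⟨S, hS, h1, h2⟩
    obtain ⟨X, Y, C, rfl⟩ : ∃ (X Y : Finset (Fin (M - 1))) (C : Finset Bool),
        S = X.disjSum (Y.disjSum C) :=
      ⟨S.toLeft, S.toRight.toLeft, S.toRight.toRight, by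
        rw [Finset.toLeft_disjSum_toRight, Finset.toLeft_disjSum_toRight]⟩
    rw [wt_disj] at h1
    rw [imb_disj] at h2
    have hC : ¬ (false ∈ C ∧ true ∈ C) := by simpa using hS
    have hcard : C.card = (C.filter fun b => b = false).card
        + (C.filter fun b => b = true).card ∧
        (C.filter fun b => b = false).card + (C.filter fun b => b = true).card ≤ 1 := by
      clear h1 h2 hS
      revert C
      decide
    refine ⟨1 + X.card - (C.filter fun b => b = true).card,
      1 + Y.card - (C.filter fun b => b = false).card, ?_, ?_, ?_, ?_, ?_⟩ <;> omega

end Stmt10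
end

section
/- Let D', D₁, D₂, …, D_l be pairwise disjoint directed multigraphs (l ≥ 1), let a₁, …, a_l be distinct arcs of D', and for each i ∈ {1,…,l} let D be formed by joining a_i to some arc of D_i, where joining an arc from u to v with an arc from x to y means identifying u with x and v with y while keeping both arcs. Then pw(D) ≤ pw(D') + max_{i ∈ {1,…,l}} pw(D_i) + 1, where pw denotes pathwidth of the underlying undirected graph. -/
namespace Stmt11

/-- The adjacency relation of the underlying undirected graph of a directed multigraph
with tail map `tl` and head map `hd`. -/
def UAdj {V A : Type*} (tl hd : A → V) (x y : V) : Prop :=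
  ∃ a : A, (tl a = x ∧ hd a = y) ∨ (tl a = y ∧ hd a = x)

/-- `PwLE Adj w` : the graph with adjacency relation `Adj` has pathwidth at most `w`,
i.e. it has a path decomposition (a finite sequence of bags covering all vertices and
all edges, in which the bags containing any fixed vertex form an interval) all of whose
bags have at most `w + 1` vertices. -/
def PwLE {V : Type*} (Adj : V → V → Prop) (w : ℕ) : Prop :=
  ∃ (s : ℕ) (B : Fin s → Finset V),
    (∀ v : V, ∃ i, v ∈ B i) ∧
    (∀ x y : V, Adj x y → ∃ i, x ∈ B i ∧ y ∈ B i) ∧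
    (∀ (v : V) (i j k : Fin s), i ≤ j → j ≤ k → v ∈ B i → v ∈ B k → v ∈ B j) ∧
    (∀ i, (B i).card ≤ w + 1)

/-- A path decomposition may be indexed by any finite linear order. -/
theorem PwLE.of_linearOrder {V ι : Type*} [Finite ι] [LinearOrder ι] (Adj : V → V → Prop) (w : ℕ)
    (B : ι → Finset V) (h1 : ∀ v : V, ∃ i, v ∈ B i)
    (h2 : ∀ x y : V, Adj x y → ∃ i, x ∈ B i ∧ y ∈ B i)
    (h3 : ∀ (v : V) (i j k : ι), i ≤ j → j ≤ k → v ∈ B i → v ∈ B k → v ∈ B j)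
    (h4 : ∀ i, (B i).card ≤ w + 1) : PwLE Adj w := by
  have := Fintype.ofFinite ι
  let e := Fintype.orderIsoFinOfCardEq ι rfl
  refine ⟨Fintype.card ι, fun i => B (e i), ?_, ?_, ?_, fun i => h4 _⟩
  · intro v
    obtain ⟨i, hi⟩ := h1 v
    exact ⟨e.symm i, by simpa using hi⟩
  · intro x y hxy
    obtain ⟨i, hi⟩ := h2 x y hxy
    exact ⟨e.symm i, by simpa using hi⟩
  · intro v i j k hij hjk
    exact h3 v _ _ _ (e.monotone hij) (e.monotone hjk)

section Join

variable {V' A' : Type} {l : ℕ} {Vg Ag : Fin l → Type}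

/-- The vertex map embedding the graph `D i` into the joined graph `D`: the tail and
head of the joined arc `b i` of `D i` are identified with the tail and head of the arc
`a i` of `D'`, and every other vertex of `D i` remains a fresh vertex. -/
def jmap [∀ i, DecidableEq (Vg i)] (t' h' : A' → V') (tg hg : ∀ i, Ag i → Vg i)
    (a : Fin l → A') (b : ∀ i, Ag i) (i : Fin l) (x : Vg i) :
    V' ⊕ (Σ i, Vg i) :=
  if x = tg i (b i) then Sum.inl (t' (a i))
  else if x = hg i (b i) then Sum.inl (h' (a i))
  else Sum.inr ⟨i, x⟩

/-- Tail map of the joined graph `D` (arcs of `D` are the arcs of `D'` together with the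
arcs of the `D i`; both members of each joined pair of arcs are kept). -/
def jTail [∀ i, DecidableEq (Vg i)] (t' h' : A' → V') (tg hg : ∀ i, Ag i → Vg i)
    (a : Fin l → A') (b : ∀ i, Ag i) : A' ⊕ (Σ i, Ag i) → V' ⊕ (Σ i, Vg i) :=
  Sum.elim (fun x => Sum.inl (t' x))
    (fun x => jmap t' h' tg hg a b x.1 (tg x.1 x.2))

/-- Head map of the joined graph `D`. -/
def jHead [∀ i, DecidableEq (Vg i)] (t' h' : A' → V') (tg hg : ∀ i, Ag i → Vg i)
    (a : Fin l → A') (b : ∀ i, Ag i) : A' ⊕ (Σ i, Ag i) → V' ⊕ (Σ i, Vg i) :=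
  Sum.elim (fun x => Sum.inl (h' x))
    (fun x => jmap t' h' tg hg a b x.1 (hg x.1 x.2))

/-- Let `D', D₁, …, D_l` (`l ≥ 1`) be pairwise disjoint directed
multigraphs, `a₁, …, a_l` distinct arcs of `D'`, and let `D` be formed by joining `a i`
with the arc `b i` of `D i` for each `i` (identifying the endpoints and keeping both
arcs).  If the underlying graph of `D'` has pathwidth at most `p` and that of each `D i`
has pathwidth at most `m` (e.g. `m = max_i pw(D_i)`), then the underlying graph of `D`
has pathwidth at most `p + m + 1`. -/
theorem pathwidth_join [Fintype V'] [DecidableEq V'] [Fintype A'] [DecidableEq A']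
    [∀ i, Fintype (Vg i)] [∀ i, DecidableEq (Vg i)]
    [∀ i, Fintype (Ag i)] [∀ i, DecidableEq (Ag i)]
    (hl : 1 ≤ l)
    (t' h' : A' → V') (tg hg : ∀ i, Ag i → Vg i)
    (a : Fin l → A') (ha : Function.Injective a) (b : ∀ i, Ag i)
    (p m : ℕ)
    (hp : PwLE (UAdj t' h') p)
    (hm : ∀ i : Fin l, PwLE (UAdj (tg i) (hg i)) m) :
    PwLE (UAdj (jTail t' h' tg hg a b) (jHead t' h' tg hg a b)) (p + m + 1) := by
  classical
  obtain ⟨s, B', c1, c2, c3, c4⟩ := hp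
  choose S B d1 d2 d3 d4 using hm
  have hf : ∀ i, ∃ j, t' (a i) ∈ B' j ∧ h' (a i) ∈ B' j :=
    fun i => c2 _ _ ⟨a i, Or.inl ⟨rfl, rfl⟩⟩
  choose f hf1 hf2 using hf
  have i0 : Fin l := ⟨0, hl⟩
  obtain ⟨k0, -⟩ := d1 i0 (tg i0 (b i0))
  let bag : Fin s → (i : Fin l) → Fin (S i) → Finset (V' ⊕ (Σ i, Vg i)) := fun j i k =>
    (B' j).disjSum (if f i = j then (B i k).map ⟨Sigma.mk i, sigma_mk_injective⟩ else ∅)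
  have hinl : ∀ j i k v, Sum.inl v ∈ bag j i k ↔ v ∈ B' j := by
    intro j i k v
    simp [bag]
  have hinr : ∀ j i k i' x, Sum.inr ⟨i', x⟩ ∈ bag j i k ↔
      f i = j ∧ ∃ y ∈ B i k, (⟨i, y⟩ : Σ i, Vg i) = ⟨i', x⟩ := by
    intro j i k i' x
    by_cases h : f i = j <;> simp [bag, h]
  have hj : ∀ i k x, x ∈ B i k → jmap t' h' tg hg a b i x ∈ bag (f i) i k := by
    intro i k x hx
    unfold jmap
    split_ifs
    · rw [hinl]; exact hf1 i
    · rw [hinl]; exact hf2 i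
    · rw [hinr]; exact ⟨rfl, x, hx, rfl⟩
  have key : ∀ x y, UAdj (jTail t' h' tg hg a b) (jHead t' h' tg hg a b) x y →
      ∃ j i k, x ∈ bag j i k ∧ y ∈ bag j i k := by
    have main : ∀ c, ∃ j i k, jTail t' h' tg hg a b c ∈ bag j i k ∧
        jHead t' h' tg hg a b c ∈ bag j i k := by
      rintro (c | ⟨i, c⟩)
      · obtain ⟨j, h1, h2⟩ := c2 _ _ ⟨c, Or.inl ⟨rfl, rfl⟩⟩
        exact ⟨j, i0, k0, (hinl _ _ _ _).2 h1, (hinl _ _ _ _).2 h2⟩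
      · obtain ⟨k, h1, h2⟩ := d2 i _ _ ⟨c, Or.inl ⟨rfl, rfl⟩⟩
        exact ⟨f i, i, k, hj i k _ h1, hj i k _ h2⟩
    rintro x y ⟨c, ⟨rfl, rfl⟩ | ⟨rfl, rfl⟩⟩
    · exact main c
    · obtain ⟨j, i, k, h1, h2⟩ := main c
      exact ⟨j, i, k, h2, h1⟩
  have : Finite (Fin s ×ₗ (Σₗ i, Fin (S i))) :=
    inferInstanceAs (Finite (Fin s × (Σ i, Fin (S i))))
  refine PwLE.of_linearOrder (ι := Fin s ×ₗ (Σₗ i, Fin (S i))) _ _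
    (fun q => bag (ofLex q).1 (ofLex (ofLex q).2).1 (ofLex (ofLex q).2).2) ?_ ?_ ?_ ?_
  · rintro (v | ⟨i, x⟩)
    · obtain ⟨j, h⟩ := c1 v
      exact ⟨toLex (j, toLex ⟨i0, k0⟩), (hinl _ _ _ _).2 h⟩
    · obtain ⟨k, h⟩ := d1 i x
      exact ⟨toLex (f i, toLex ⟨i, k⟩), (hinr _ _ _ _ _).2 ⟨rfl, x, h, rfl⟩⟩
  · intro x y hxy
    obtain ⟨j, i, k, h⟩ := key x y hxy
    exact ⟨toLex (j, toLex ⟨i, k⟩), h⟩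
  · rintro v ⟨j₁, i₁, k₁⟩ ⟨j₂, i₂, k₂⟩ ⟨j₃, i₃, k₃⟩ h12 h23 m1 m3
    change v ∈ bag j₁ i₁ k₁ at m1
    change v ∈ bag j₃ i₃ k₃ at m3
    change v ∈ bag j₂ i₂ k₂
    have e12 := Prod.Lex.le_iff.1 h12
    have e23 := Prod.Lex.le_iff.1 h23
    change j₁ < j₂ ∨ j₁ = j₂ ∧ Sigma.Lex (α := fun i => Fin (S i)) (· < ·)
      (fun _ => (· ≤ ·)) ⟨i₁, k₁⟩ ⟨i₂, k₂⟩ at e12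
    change j₂ < j₃ ∨ j₂ = j₃ ∧ Sigma.Lex (α := fun i => Fin (S i)) (· < ·)
      (fun _ => (· ≤ ·)) ⟨i₂, k₂⟩ ⟨i₃, k₃⟩ at e23
    rcases v with v | ⟨i, x⟩
    · rw [hinl] at *
      refine c3 v j₁ j₂ j₃ ?_ ?_ m1 m3
      · rcases e12 with h | h
        exacts [h.le, h.1.le]
      · rcases e23 with h | h
        exacts [h.le, h.1.le]
    · rw [hinr] at *
      obtain ⟨rfl, y, hy, e⟩ := m1
      obtain ⟨rfl, z, hz, e'⟩ := m3
      cases e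
      cases e'
      rcases e12 with h | ⟨rfl, h⟩
      · rcases e23 with h' | ⟨rfl, h'⟩
        · exact absurd (h.trans h') (lt_irrefl _)
        · exact absurd h (lt_irrefl _)
      rcases e23 with h' | ⟨-, h'⟩
      · exact absurd h' (lt_irrefl _)
      rw [Sigma.lex_iff] at h h'
      rcases h with h | ⟨h, hk⟩
      · rcases h' with h' | ⟨h', hk'⟩
        · exact absurd (lt_trans h h') (lt_irrefl _)
        · exact absurd h (by simp at h' ⊢; exact h'.le)
      · dsimp only at h
        subst h
        rcases h' with h' | ⟨h', hk'⟩
        · exact absurd h' (lt_irrefl _)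
        · exact ⟨rfl, _, d3 _ _ _ _ _ hk hk' hy hz, rfl⟩
  · intro q
    simp only [bag, Finset.card_disjSum]
    have h1 := c4 (ofLex q).1
    have h2 := d4 _ (ofLex (ofLex q).2).2
    split_ifs
    · rw [Finset.card_map]; omega
    · rw [Finset.card_empty]; omega

end Join

end Stmt11
end

section
/- Let G = (V, E ∪ A) be a mixed graph in which every edge and arc has weight 1, and let H be a solution of G: for each edge or arc uv of G, a two-vertex multigraph H_uv on {u, v} covering uv, such that for every vertex x the sum over all edges and arcs at x of the imbalances of the corresponding H_uv at x is 0. Let M = w(H) = Σ_uv w(H_uv). Suppose that for each edge or arc uv of G we are given a directed multigraph D_uv on vertex set {u, v} with integer arc weights, double arcs, and forbidden pairs (the gadgets for distinct edges/arcs having no arcs in common) such that for all integers W and B with w(H_uv) + W ≤ M the following are equivalent: (i) there is a two-vertex multigraph H'_uv on {u, v} covering uv with weight w(H_uv) + W and imbalance at u equal to the imbalance of H_uv at u plus B; (ii) D_uv has an arc subset which respects double arcs and forbidden pairs, has total weight W, and has imbalance B at u. Let D be the directed multigraph on vertex set V whose arcs, double arcs and forbidden pairs are the unions of those of the gadgets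 D_uv over all edges and arcs uv of G. Then there exists a solution H' of G with w(H') < w(H) if and only if D has a properly balanced arc subset of total weight less than 0. -/
namespace Stmt16

/-- Imbalance, at the vertex `x`, of a two-vertex multigraph `(p, q)` on `(u, v)`
(`p` arcs from `u` to `v` and `q` arcs from `v` to `u`): `p − q` at `u` and `q − p`
at `v`. -/
def contrib {V : Type*} [DecidableEq V] (u v : V) (pq : ℕ × ℕ) (x : V) : ℤ :=
  (if x = u then (pq.1 : ℤ) - (pq.2 : ℤ) else 0) +
    (if x = v then (pq.2 : ℤ) - (pq.1 : ℤ) else 0)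

variable {V E A : Type}

/-- `H` is a solution of the mixed graph `G = (V, E ∪ A)` (with edge endpoint maps
`eFst`, `eSnd` and arc maps `ta`, `hd`): it assigns to each edge or arc `uv` a
two-vertex multigraph `H f = (p, q)` on `{u, v}` covering `uv` (for an arc, `p ≥ 1`;
for an edge, `p + q ≥ 1`), such that at every vertex the imbalances of the `H f` sum
to `0`. -/
def IsSolution [Fintype E] [Fintype A] [DecidableEq V]
    (eFst eSnd : E → V) (ta hd : A → V) (H : E ⊕ A → ℕ × ℕ) : Prop :=
  (∀ a : A, 1 ≤ (H (Sum.inr a)).1) ∧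
  (∀ e : E, 1 ≤ (H (Sum.inl e)).1 + (H (Sum.inl e)).2) ∧
  (∀ x : V, (∑ f : E ⊕ A,
      contrib (Sum.elim eFst ta f) (Sum.elim eSnd hd f) (H f) x) = 0)

/-- The weight of a solution: every edge and arc has weight `1`, so each `H f = (p, q)`
has weight `p + q`. -/
def weightSol [Fintype E] [Fintype A] (H : E ⊕ A → ℕ × ℕ) : ℕ :=
  ∑ f : E ⊕ A, ((H f).1 + (H f).2)

/-- signed incidence of an arc with tail `t` and head `h` at `x` -/
def inc {V : Type} [DecidableEq V] (t h x : V) : ℤ :=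
  (if t = x then 1 else 0) - (if h = x then 1 else 0)

theorem card_eq_inc {V ι : Type} [DecidableEq V] (S : Finset ι) (t h : ι → V) (x : V) :
    ((S.filter fun b => t b = x).card : ℤ) - ((S.filter fun b => h b = x).card : ℤ)
      = ∑ b ∈ S, inc (t b) (h b) x := by
  simp only [inc, Finset.sum_sub_distrib, Finset.sum_boole]

theorem inc_local {V : Type} [DecidableEq V] (u v t h x : V)
    (hh : (t = u ∧ h = v) ∨ (t = v ∧ h = u)) :
    inc t h x = (if x = u then inc t h u else 0) - (if x = v then inc t h u else 0) := by
  rcases hh with ⟨rfl, rfl⟩ | ⟨rfl, rfl⟩ <;> unfold inc <;> grind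

theorem sum_inc_local {V ι : Type} [DecidableEq V] (S : Finset ι) (t h : ι → V) (u v x : V)
    (hh : ∀ b, (t b = u ∧ h b = v) ∨ (t b = v ∧ h b = u)) :
    ∑ b ∈ S, inc (t b) (h b) x =
      (if x = u then ∑ b ∈ S, inc (t b) (h b) u else 0)
        - (if x = v then ∑ b ∈ S, inc (t b) (h b) u else 0) := by
  rw [Finset.sum_congr rfl (fun b _ => inc_local u v (t b) (h b) x (hh b)),
    Finset.sum_sub_distrib]
  split_ifs <;> simp

theorem contrib_diff {V : Type} [DecidableEq V] (u v x : V) (p q : ℕ × ℕ) (B : ℤ)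
    (hB : (p.1 : ℤ) - p.2 = (q.1 : ℤ) - q.2 + B) :
    contrib u v p x = contrib u v q x +
      ((if x = u then B else 0) - (if x = v then B else 0)) := by
  unfold contrib
  split_ifs <;> linarith

/-- `G = (V, E ∪ A)` is a mixed graph whose edges and arcs all have
weight `1`, and `H` is a solution of `G` of weight `M = w(H)`.  For each edge or arc
`f` (with endpoints `u = lFst f`, `v = lSnd f`) we are given a gadget: a directed
multigraph `D_f` on `{u, v}` with arc type `Af f`, tail/head maps `gt f`/`gh f`,
integer weights `gw f`, double arcs `X f` and forbidden pairs `Y f` (arcs of distinct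
gadgets are distinct since the global arc type is the sigma type), such that for all
integers `W`, `B` with `w(H_f) + W ≤ M` the following are equivalent:
(i) there is a two-vertex multigraph on `{u, v}` covering `f`, of weight `w(H_f) + W`
    and imbalance at `u` equal to the imbalance of `H_f` at `u` plus `B`;
(ii) `D_f` has an arc subset respecting double arcs and forbidden pairs, of total
     weight `W` and imbalance `B` at `u`.
Let `D` be the union over all `f` of the gadgets `D_f`.  Then `G` has a solution of
weight less than `w(H)` iff `D` has a properly balanced arc subset of negative total
weight. -/
theorem mcpp_to_pbs [Fintype V] [DecidableEq V] [Fintype E] [DecidableEq E]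
    [Fintype A] [DecidableEq A]
    (eFst eSnd : E → V) (ta hd : A → V)
    (H : E ⊕ A → ℕ × ℕ) (hsol : IsSolution eFst eSnd ta hd H)
    (Af : E ⊕ A → Type) [∀ f, Fintype (Af f)] [∀ f, DecidableEq (Af f)]
    (gt gh : ∀ f, Af f → V) (gw : ∀ f, Af f → ℤ)
    (X Y : ∀ f, Set (Af f × Af f))
    -- each gadget lives on the two endpoints of its edge or arc
    (hon : ∀ (f : E ⊕ A) (b : Af f),
      (gt f b = Sum.elim eFst ta f ∧ gh f b = Sum.elim eSnd hd f) ∨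
      (gt f b = Sum.elim eSnd hd f ∧ gh f b = Sum.elim eFst ta f))
    -- double arcs are pairs of distinct parallel arcs, forbidden pairs are pairs of
    -- distinct mutually reverse arcs, and they are disjoint
    (hX : ∀ f, ∀ p ∈ X f, p.1 ≠ p.2 ∧ gt f p.1 = gt f p.2 ∧ gh f p.1 = gh f p.2)
    (hY : ∀ f, ∀ p ∈ Y f, p.1 ≠ p.2 ∧ gt f p.1 = gh f p.2 ∧ gh f p.1 = gt f p.2)
    (hXY : ∀ f, ∀ p ∈ X f, ∀ q ∈ Y f,
      p.1 ≠ q.1 ∧ p.1 ≠ q.2 ∧ p.2 ≠ q.1 ∧ p.2 ≠ q.2)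
    -- the defining property of the gadgets
    (hequiv : ∀ (f : E ⊕ A) (W B : ℤ),
      (((H f).1 + (H f).2 : ℤ) + W ≤ (weightSol H : ℤ)) →
      ((∃ p q : ℕ,
          (match f with
            | Sum.inl _ => 1 ≤ p + q
            | Sum.inr _ => 1 ≤ p) ∧
          ((p : ℤ) + q = ((H f).1 + (H f).2 : ℤ) + W) ∧
          ((p : ℤ) - q = ((H f).1 : ℤ) - ((H f).2 : ℤ) + B)) ↔
        (∃ S : Finset (Af f),
          (∀ p ∈ X f, (p.1 ∈ S ↔ p.2 ∈ S)) ∧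
          (∀ p ∈ Y f, ¬(p.1 ∈ S ∧ p.2 ∈ S)) ∧
          (∑ b ∈ S, gw f b) = W ∧
          ((S.filter fun b => gt f b = Sum.elim eFst ta f).card : ℤ) -
            ((S.filter fun b => gh f b = Sum.elim eFst ta f).card : ℤ) = B))) :
    -- G has a better solution iff D has a properly balanced subset of negative weight
    (∃ H' : E ⊕ A → ℕ × ℕ,
        IsSolution eFst eSnd ta hd H' ∧ weightSol H' < weightSol H) ↔
    (∃ S : Finset (Σ f : E ⊕ A, Af f),
        -- S is balanced
        (∀ x : V, (S.filter fun b => gt b.1 b.2 = x).card =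
            (S.filter fun b => gh b.1 b.2 = x).card) ∧
        -- S respects the double arcs of D
        (∀ (f : E ⊕ A), ∀ p ∈ X f,
          ((⟨f, p.1⟩ : Σ f, Af f) ∈ S ↔ (⟨f, p.2⟩ : Σ f, Af f) ∈ S)) ∧
        -- S respects the forbidden pairs of D
        (∀ (f : E ⊕ A), ∀ p ∈ Y f,
          ¬((⟨f, p.1⟩ : Σ f, Af f) ∈ S ∧ (⟨f, p.2⟩ : Σ f, Af f) ∈ S)) ∧
        -- S has negative total weight
        (∑ b ∈ S, gw b.1 b.2) < 0) := by
  classical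
  have hcard := fun (S : Finset (Σ f : E ⊕ A, Af f)) (x : V) =>
    card_eq_inc S (fun b => gt b.1 b.2) (fun b => gh b.1 b.2) x
  have hM : (weightSol H : ℤ) = ∑ f, (((H f).1 : ℤ) + (H f).2) := by
    simp [weightSol]
  constructor
  · rintro ⟨H', ⟨h1, h2, h3⟩, hlt⟩
    have hM' : (weightSol H' : ℤ) = ∑ f, (((H' f).1 : ℤ) + (H' f).2) := by
      simp [weightSol]
    have hle : ∀ f, (((H' f).1 : ℤ) + (H' f).2) ≤ weightSol H' := by
      intro f
      rw [hM']
      exact Finset.single_le_sum (f := fun f => (((H' f).1 : ℤ) + (H' f).2))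
        (fun i _ => by positivity) (Finset.mem_univ f)
    have key : ∀ f, ∃ S : Finset (Af f),
          (∀ p ∈ X f, (p.1 ∈ S ↔ p.2 ∈ S)) ∧
          (∀ p ∈ Y f, ¬(p.1 ∈ S ∧ p.2 ∈ S)) ∧
          (∑ b ∈ S, gw f b) = ((H' f).1 + (H' f).2 : ℤ) - ((H f).1 + (H f).2) ∧
          ((S.filter fun b => gt f b = Sum.elim eFst ta f).card : ℤ) -
            ((S.filter fun b => gh f b = Sum.elim eFst ta f).card : ℤ)
            = ((H' f).1 - (H' f).2 : ℤ) - ((H f).1 - (H f).2) := by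
      intro f
      refine (hequiv f _ _ ?_).1 ⟨(H' f).1, (H' f).2, ?_, by ring, by ring⟩
      · have := hle f
        omega
      · rcases f with e | a
        · exact h2 e
        · exact h1 a
    choose T hTX hTY hTw hTb using key
    refine ⟨Finset.univ.sigma T, ?_, ?_, ?_, ?_⟩
    · intro x
      have := hcard (Finset.univ.sigma T) x
      rw [Finset.sum_sigma] at this
      have hz : ∑ f, ∑ b ∈ T f, inc (gt f b) (gh f b) x = 0 := by
        have e : ∀ f, ∑ b ∈ T f, inc (gt f b) (gh f b) x =
            contrib (Sum.elim eFst ta f) (Sum.elim eSnd hd f) (H' f) x -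
            contrib (Sum.elim eFst ta f) (Sum.elim eSnd hd f) (H f) x := by
          intro f
          have hb := hTb f
          rw [card_eq_inc] at hb
          rw [sum_inc_local (T f) (gt f) (gh f) _ _ x (hon f), hb,
            contrib_diff _ _ x (H' f) (H f)
              (((H' f).1 - (H' f).2 : ℤ) - ((H f).1 - (H f).2)) (by ring)]
          ring
        rw [Finset.sum_congr rfl (fun f _ => e f), Finset.sum_sub_distrib, h3 x, hsol.2.2 x,
          sub_zero]
      rw [hz] at this
      omega
    · intro f p hp
      simpa using hTX f p hp
    · intro f p hp
      simpa using hTY f p hp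
    · rw [Finset.sum_sigma]
      simp only [hTw]
      rw [Finset.sum_sub_distrib, ← hM, ← hM']
      omega
  · rintro ⟨S, hbal, hSX, hSY, hSw⟩
    let T : ∀ f, Finset (Af f) := fun f => Finset.univ.filter fun b => (⟨f, b⟩ : Σ f, Af f) ∈ S
    have hST : S = Finset.univ.sigma T := by
      ext ⟨f, b⟩
      simp [T]
    let W : E ⊕ A → ℤ := fun f => ∑ b ∈ T f, gw f b
    have hW : ∑ f, W f < 0 := by
      rw [hST, Finset.sum_sigma] at hSw
      exact hSw
    have key : ∀ f, (((H f).1 + (H f).2 : ℤ) + W f ≤ (weightSol H : ℤ)) → ∃ p q : ℕ,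
          (match f with
            | Sum.inl _ => 1 ≤ p + q
            | Sum.inr _ => 1 ≤ p) ∧
          ((p : ℤ) + q = ((H f).1 + (H f).2 : ℤ) + W f) ∧
          ((p : ℤ) - q = ((H f).1 : ℤ) - ((H f).2 : ℤ) +
            ∑ b ∈ T f, inc (gt f b) (gh f b) (Sum.elim eFst ta f)) := by
      intro f hf
      refine (hequiv f (W f) _ hf).2 ⟨T f, ?_, ?_, rfl, card_eq_inc _ _ _ _⟩
      · intro p hp
        simpa [T] using hSX f p hp
      · intro p hp
        simpa [T] using hSY f p hp
    have hnn : ∀ f, 0 ≤ ((H f).1 + (H f).2 : ℤ) + W f := by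
      intro f
      by_cases hf : ((H f).1 + (H f).2 : ℤ) + W f ≤ (weightSol H : ℤ)
      · obtain ⟨p, q, -, h, -⟩ := key f hf
        omega
      · omega
    have hsum : ∑ f, (((H f).1 + (H f).2 : ℤ) + W f) < weightSol H := by
      rw [Finset.sum_add_distrib, ← hM]
      omega
    have hle : ∀ f, ((H f).1 + (H f).2 : ℤ) + W f ≤ (weightSol H : ℤ) := by
      intro f
      have := Finset.single_le_sum (f := fun f => (((H f).1 + (H f).2 : ℤ) + W f))
        (fun i _ => hnn i) (Finset.mem_univ f)
      exact this.trans hsum.le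
    choose p q hcov hpw hpb using fun f => key f (hle f)
    refine ⟨fun f => (p f, q f), ⟨fun a => hcov (Sum.inr a), fun e => hcov (Sum.inl e), ?_⟩, ?_⟩
    · intro x
      have e : ∀ f, contrib (Sum.elim eFst ta f) (Sum.elim eSnd hd f) (p f, q f) x =
          contrib (Sum.elim eFst ta f) (Sum.elim eSnd hd f) (H f) x +
            ∑ b ∈ T f, inc (gt f b) (gh f b) x := by
        intro f
        rw [sum_inc_local (T f) (gt f) (gh f) _ _ x (hon f)]
        exact contrib_diff _ _ x (p f, q f) (H f) _ (hpb f)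
      rw [Finset.sum_congr rfl (fun f _ => e f), Finset.sum_add_distrib, hsol.2.2 x, zero_add]
      have h := hcard S x
      rw [hbal x, sub_self] at h
      rw [hST, Finset.sum_sigma] at h
      exact h.symm
    · have : (weightSol (fun f => (p f, q f)) : ℤ) < weightSol H := by
        refine lt_of_eq_of_lt ?_ hsum
        rw [← Finset.sum_congr rfl (fun f _ => hpw f)]
        simp [weightSol]
      exact_mod_cast this

end Stmt16
end
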